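/- Let ρ : ℝ^n → (0,∞) be a 1/2-Lipschitz function (with ℝ^n equipped with the Euclidean norm) for which there exist constants 0 < ε ≤ 1, m > 0, R > 0 with m ≤ ρ(x) ≤ R⟨x⟩^{1−ε} for all x ∈ ℝ^n. Let ω ⊂ ℝ^n be a measurable subset which is γ-thick with respect to the density ρ for some 0 < γ ≤ 1. Then there exist positive constants κ > 0 and C̃ > 0 (depending on n, m, R, γ, ε) and a positive constant κ̃ > 1 depending only on the dimension n such that for every integer N ≥ 1 and every f ∈ E_N, ‖f‖_{L²(ℝ^n)} ≤ κ (κ̃/γ)^{C̃ N^{1−ε/2}} ‖f‖_{L²(ω)}. -/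

import Mathlib

open MeasureTheory
open scoped BigOperators ENNReal NNReal

noncomputable section

abbrev En (n : ℕ) := EuclideanSpace ℝ (Fin n)

/-- One-dimensional Hermite function. -/
def hermite1 (k : ℕ) (x : ℝ) : ℝ :=
  (-1 : ℝ) ^ k * ((2 ^ k * (k.factorial : ℝ) * Real.sqrt Real.pi) ^ (-(1/2 : ℝ))) *
    Real.exp (x ^ 2 / 2) * iteratedDeriv k (fun y => Real.exp (-y ^ 2)) x

/-- Tensorized Hermite function on ℝⁿ. -/
def hermiteFun (n : ℕ) (α : Fin n → ℕ) (x : En n) : ℂ :=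
  ∏ j, (hermite1 (α j) (x j) : ℂ)

/-- The span E_N of Hermite functions with |α| ≤ N. -/
def hermiteSpan (n N : ℕ) : Submodule ℂ (En n → ℂ) :=
  Submodule.span ℂ {g | ∃ α : Fin n → ℕ, (∑ j, α j) ≤ N ∧ g = hermiteFun n α}

/-- Japanese bracket ⟨x⟩. -/
def jap (n : ℕ) (x : En n) : ℝ := Real.sqrt (1 + ‖x‖ ^ 2)

/-- γ-thickness with respect to a density ρ. -/
def ThickWith (n : ℕ) (γ : ℝ) (ρ : En n → ℝ) (ω : Set (En n)) : Prop :=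
  ∀ x : En n,
    ENNReal.ofReal γ * volume (Metric.ball x (ρ x)) ≤ volume (ω ∩ Metric.ball x (ρ x))

/-- L² norm on ℝⁿ. -/
def L2norm (n : ℕ) (f : En n → ℂ) : ℝ := Real.sqrt (∫ x, ‖f x‖ ^ 2)

/-- L² norm on a subset ω. -/
def L2normOn (n : ℕ) (ω : Set (En n)) (f : En n → ℂ) : ℝ :=
  Real.sqrt (∫ x in ω, ‖f x‖ ^ 2)

/-!
Write `f = ∑ c_α Φ_α`. The weights `x ^ (2p)` have explicitly bounded matrix elements in the
Hermite basis, so at least half of the mass of `f` lies in a box of side `≈ √N`. Cut this box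
into cubes of side `≈ N ^ ((1 - ε) / 2)`, which is at least four times the density `ρ` there; by
a Vitali covering, thickness on balls then becomes thickness on each cube. On a cube the bounds
on the derivatives of the Hermite functions make `f` equal, up to an error small relative to its
global norm, to a function that is polynomial of degree `D ≈ K N ^ (1 - ε / 2)` in each variable,
by Taylor expansion. For such functions a Remez inequality, iterated over the variables, bounds
the norm on the cube by `C ^ D` times the norm on `ω`. Summing over the cubes, the errors add up
to at most a quarter of the mass of `f` once the constant `K` is large enough, and are absorbed.
-/

/-! ### One-dimensional Hermite functions -/

lemma contDiff_exp_neg_sq : ContDiff ℝ (⊤ : ℕ∞) fun y : ℝ => Real.exp (-y ^ 2) := by fun_prop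

lemma hasDerivAt_iteratedDeriv_exp_neg_sq (k : ℕ) (x : ℝ) :
    HasDerivAt (iteratedDeriv k fun y : ℝ => Real.exp (-y ^ 2))
      (iteratedDeriv (k + 1) (fun y : ℝ => Real.exp (-y ^ 2)) x) x := by
  rw [iteratedDeriv_succ]
  exact (contDiff_exp_neg_sq.differentiable_iteratedDeriv k
    (by exact_mod_cast ENat.natCast_lt_top k) x).hasDerivAt

-- At `k = 0` the truncated `k - 1` is harmless, its coefficient being `0`.
lemma iteratedDeriv_succ_exp_neg_sq (k : ℕ) (x : ℝ) :
    iteratedDeriv (k + 1) (fun y : ℝ => Real.exp (-y ^ 2)) x =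
      -2 * x * iteratedDeriv k (fun y : ℝ => Real.exp (-y ^ 2)) x -
        2 * k * iteratedDeriv (k - 1) (fun y : ℝ => Real.exp (-y ^ 2)) x := by
  induction k generalizing x with
  | zero =>
    have h : HasDerivAt (fun y : ℝ => Real.exp (-y ^ 2)) (Real.exp (-x ^ 2) * -(2 * x)) x := by
      simpa using ((hasDerivAt_id x).pow 2).neg.exp
    rw [zero_add, iteratedDeriv_one, h.deriv]
    simp [mul_comm]
  | succ k ih =>
    have hlin : HasDerivAt (fun y : ℝ => -2 * y) (-2) x := by
      simpa using (hasDerivAt_id x).const_mul (-2)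
    have hprod := (hlin.mul (hasDerivAt_iteratedDeriv_exp_neg_sq k x)).sub
      ((hasDerivAt_iteratedDeriv_exp_neg_sq (k - 1) x).const_mul (2 * (k : ℝ)))
    have heq := (hasDerivAt_iteratedDeriv_exp_neg_sq (k + 1) x).unique
      (hprod.congr_of_eventuallyEq (Filter.Eventually.of_forall ih))
    rcases k with _ | k
    · rw [heq]
      simp
      ring
    · rw [heq, Nat.add_sub_cancel, Nat.add_sub_cancel]
      push_cast
      ring

/-- The constant `(2 ^ k k! √π) ^ (-1/2)` that normalises the `k`-th Hermite function in `L²`. -/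
def hermiteNorm (k : ℕ) : ℝ := (2 ^ k * (k.factorial : ℝ) * √Real.pi) ^ (-(1 / 2 : ℝ))

lemma hermiteNorm_eq_sqrt_mul_succ (k : ℕ) :
    hermiteNorm k = √(2 * (k + 1)) * hermiteNorm (k + 1) := by
  have hfac : (2 : ℝ) ^ (k + 1) * ((k + 1).factorial : ℝ) * √Real.pi =
      2 * (k + 1) * (2 ^ k * (k.factorial : ℝ) * √Real.pi) := by
    rw [Nat.factorial_succ]
    push_cast
    ring
  rw [hermiteNorm, hermiteNorm, hfac, Real.mul_rpow (x := 2 * ((k : ℝ) + 1)) (by positivity)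
    (by positivity), ← mul_assoc, Real.sqrt_eq_rpow (2 * ((k : ℝ) + 1)),
    ← Real.rpow_add (by positivity)]
  norm_num

lemma hermiteNorm_zero_sq : hermiteNorm 0 ^ 2 = (√Real.pi)⁻¹ := by
  rw [hermiteNorm, ← Real.rpow_natCast, ← Real.rpow_mul (by positivity)]
  norm_num [Real.rpow_neg_one]

lemma hermite1_def (k : ℕ) (x : ℝ) :
    hermite1 k x = (-1) ^ k * hermiteNorm k * Real.exp (x ^ 2 / 2) *
      iteratedDeriv k (fun y => Real.exp (-y ^ 2)) x := rfl

lemma hermite1_zero (x : ℝ) : hermite1 0 x = hermiteNorm 0 * Real.exp (-x ^ 2 / 2) := by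
  rw [hermite1_def, pow_zero, one_mul, iteratedDeriv_zero, mul_assoc, ← Real.exp_add]
  ring_nf

lemma hasDerivAt_hermite1_raising (k : ℕ) (x : ℝ) :
    HasDerivAt (hermite1 k) (x * hermite1 k x - √(2 * (k + 1)) * hermite1 (k + 1) x) x := by
  have hexp : HasDerivAt (fun x : ℝ => Real.exp (x ^ 2 / 2)) (Real.exp (x ^ 2 / 2) * x) x :=
    (((hasDerivAt_id x).pow 2).div_const 2).exp.congr_deriv (by simp)
  have hmul := (hexp.const_mul ((-1) ^ k * hermiteNorm k)).mul
    (hasDerivAt_iteratedDeriv_exp_neg_sq k x)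
  refine hmul.congr_deriv ?_
  rw [hermite1_def, hermite1_def, hermiteNorm_eq_sqrt_mul_succ]
  ring

lemma sqrt_two_mul_eq (y : ℝ) : √(2 * y) = 2 * √(y / 2) := by
  rw [show 2 * y = 2 ^ 2 * (y / 2) by ring, Real.sqrt_mul (by norm_num),
    Real.sqrt_sq (by norm_num)]

lemma mul_hermite1 (k : ℕ) (x : ℝ) :
    x * hermite1 k x =
      √((k + 1) / 2) * hermite1 (k + 1) x + √(k / 2) * hermite1 (k - 1) x := by
  have hsq : √(2 * ((k : ℝ) + 1)) * √(2 * ((k : ℝ) + 1)) = 2 * (k + 1) :=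
    Real.mul_self_sqrt (by positivity)
  have hup : √(2 * ((k : ℝ) + 1)) * hermite1 (k + 1) x =
      2 * x * hermite1 k x - √(2 * k) * hermite1 (k - 1) x := by
    rcases k with _ | k
    · rw [hermite1_def, hermite1_def, hermiteNorm_eq_sqrt_mul_succ 0,
        iteratedDeriv_succ_exp_neg_sq]
      simp
      ring
    · have hsqk : √(2 * ((k : ℝ) + 1)) * √(2 * ((k : ℝ) + 1)) = 2 * (k + 1) :=
        Real.mul_self_sqrt (by positivity)
      rw [hermite1_def, hermite1_def, hermite1_def, iteratedDeriv_succ_exp_neg_sq,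
        Nat.add_sub_cancel, hermiteNorm_eq_sqrt_mul_succ k, hermiteNorm_eq_sqrt_mul_succ (k + 1)]
      push_cast at hsq hsqk ⊢
      linear_combination ((-1) ^ k * √(2 * (k + 1 + 1)) * hermiteNorm (k + 1 + 1) *
        Real.exp (x ^ 2 / 2) * iteratedDeriv k (fun y ↦ Real.exp (-y ^ 2)) x) * hsqk
  rw [sqrt_two_mul_eq, sqrt_two_mul_eq] at hup
  linarith

lemma hasDerivAt_hermite1 (k : ℕ) (x : ℝ) :
    HasDerivAt (hermite1 k)
      (√(k / 2) * hermite1 (k - 1) x - √((k + 1) / 2) * hermite1 (k + 1) x) x := by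
  refine (hasDerivAt_hermite1_raising k x).congr_deriv ?_
  rw [mul_hermite1, sqrt_two_mul_eq]
  ring

lemma continuous_hermite1 (k : ℕ) : Continuous (hermite1 k) :=
  continuous_iff_continuousAt.2 fun x => (hasDerivAt_hermite1 k x).continuousAt

lemma hermite1_eq_polynomial_mul_exp (k : ℕ) :
    ∃ p : Polynomial ℝ, ∀ x, hermite1 k x = p.eval x * Real.exp (-x ^ 2 / 2) := by
  induction k with
  | zero => exact ⟨Polynomial.C (hermiteNorm 0), fun x => by simp [hermite1_zero]⟩
  | succ k ih =>
    obtain ⟨p, hp⟩ := ih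
    have hpos : √(2 * ((k : ℝ) + 1)) ≠ 0 := by positivity
    refine ⟨Polynomial.C (√(2 * ((k : ℝ) + 1)))⁻¹ *
      (2 * Polynomial.X * p - Polynomial.derivative p), fun x => ?_⟩
    have hexp : HasDerivAt (fun x : ℝ => Real.exp (-x ^ 2 / 2))
        (Real.exp (-x ^ 2 / 2) * -x) x :=
      (((hasDerivAt_id x).pow 2).neg.div_const 2).exp.congr_deriv (by simp; ring)
    have hder := (hasDerivAt_hermite1_raising k x).unique
      (((p.hasDerivAt x).mul hexp).congr_of_eventuallyEq (Filter.Eventually.of_forall hp))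
    simp only [Polynomial.eval_mul, Polynomial.eval_sub, Polynomial.eval_C, Polynomial.eval_X,
      Polynomial.eval_ofNat]
    rw [hp] at hder
    refine mul_left_cancel₀ hpos ?_
    rw [← mul_assoc, mul_inv_cancel_left₀ hpos]
    linear_combination -hder

lemma integrable_polynomial_mul_exp_neg_sq (p : Polynomial ℝ) :
    Integrable fun x : ℝ => p.eval x * Real.exp (-x ^ 2) := by
  induction p using Polynomial.induction_on' with
  | add p q hp hq =>
    simp only [Polynomial.eval_add, add_mul]
    exact hp.add hq
  | monomial n a =>
    have hn : (-1 : ℝ) < n := neg_one_lt_zero.trans_le n.cast_nonneg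
    have h := (integrable_rpow_mul_exp_neg_mul_sq one_pos hn).const_mul a
    simpa [Real.rpow_natCast, mul_assoc] using h

lemma integrable_pow_mul_hermite1_mul (p j k : ℕ) :
    Integrable fun x : ℝ => x ^ p * (hermite1 j x * hermite1 k x) := by
  obtain ⟨P, hP⟩ := hermite1_eq_polynomial_mul_exp j
  obtain ⟨Q, hQ⟩ := hermite1_eq_polynomial_mul_exp k
  refine (integrable_polynomial_mul_exp_neg_sq (Polynomial.X ^ p * (P * Q))).congr
    (Filter.Eventually.of_forall fun x => ?_)
  have hexp : Real.exp (-x ^ 2) = Real.exp (-x ^ 2 / 2) * Real.exp (-x ^ 2 / 2) := by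
    rw [← Real.exp_add]
    ring_nf
  simp only [hP, hQ, Polynomial.eval_mul, Polynomial.eval_pow, Polynomial.eval_X, hexp]
  ring

lemma integrable_hermite1_mul (j k : ℕ) : Integrable fun x => hermite1 j x * hermite1 k x := by
  simpa using integrable_pow_mul_hermite1_mul 0 j k

lemma integrable_sq_pow_mul_hermite1 (p k : ℕ) :
    Integrable fun x : ℝ => (x ^ p * hermite1 k x) ^ 2 :=
  (integrable_pow_mul_hermite1_mul (2 * p) k k).congr
    (Filter.Eventually.of_forall fun x => by ring)

lemma memLp_hermite1 (k : ℕ) : MemLp (hermite1 k) 2 :=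
  (memLp_two_iff_integrable_sq (continuous_hermite1 k).aestronglyMeasurable).2
    (by simpa using integrable_sq_pow_mul_hermite1 0 k)

-- Integration by parts: the lowering and the raising operator are adjoint to each other.
lemma sqrt_mul_integral_hermite1_mul_succ (j k : ℕ) :
    √(2 * (k + 1)) * ∫ x, hermite1 j x * hermite1 (k + 1) x =
      √(2 * j) * ∫ x, hermite1 (j - 1) x * hermite1 k x := by
  have hlow := (integrable_hermite1_mul (j - 1) k).const_mul √(2 * j)
  have hup := (integrable_hermite1_mul j (k + 1)).const_mul √(2 * (k + 1))
  have hderiv (x : ℝ) : HasDerivAt (fun x => hermite1 j x * hermite1 k x)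
      (√(2 * j) * (hermite1 (j - 1) x * hermite1 k x) -
        √(2 * (k + 1)) * (hermite1 j x * hermite1 (k + 1) x)) x := by
    refine ((hasDerivAt_hermite1 j x).mul (hasDerivAt_hermite1_raising k x)).congr_deriv ?_
    rw [sqrt_two_mul_eq j]
    linear_combination hermite1 k x * mul_hermite1 j x
  have hzero := integral_eq_zero_of_hasDerivAt_of_integrable hderiv (hlow.sub hup)
    (integrable_hermite1_mul j k)
  rw [integral_sub hlow hup, integral_const_mul, integral_const_mul] at hzero
  linarith

lemma integral_hermite1_zero_mul_self : ∫ x, hermite1 0 x * hermite1 0 x = 1 := by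
  have hsq (x : ℝ) :
      hermite1 0 x * hermite1 0 x = hermiteNorm 0 ^ 2 * Real.exp (-1 * x ^ 2) := by
    rw [hermite1_zero, show -1 * x ^ 2 = -x ^ 2 / 2 + -x ^ 2 / 2 by ring, Real.exp_add]
    ring
  simp only [hsq]
  rw [integral_const_mul, integral_gaussian, hermiteNorm_zero_sq, div_one]
  exact inv_mul_cancel₀ (Real.sqrt_pos.2 Real.pi_pos).ne'

lemma integral_hermite1_zero_mul_succ (k : ℕ) :
    ∫ x, hermite1 0 x * hermite1 (k + 1) x = 0 := by
  have h := sqrt_mul_integral_hermite1_mul_succ 0 k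
  rw [Nat.cast_zero, mul_zero, Real.sqrt_zero, zero_mul] at h
  exact (mul_eq_zero.1 h).resolve_left (by positivity)

lemma integral_hermite1_mul (j k : ℕ) :
    ∫ x, hermite1 j x * hermite1 k x = if j = k then 1 else 0 := by
  induction j generalizing k with
  | zero =>
    rcases k with _ | k
    · exact integral_hermite1_zero_mul_self
    · exact integral_hermite1_zero_mul_succ k
  | succ j ih =>
    rcases k with _ | k
    · simpa [mul_comm] using integral_hermite1_zero_mul_succ j
    · have h := sqrt_mul_integral_hermite1_mul_succ (j + 1) k
      rw [Nat.add_sub_cancel, ih k] at h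
      have hpos : √(2 * ((k : ℝ) + 1)) ≠ 0 := by positivity
      rcases eq_or_ne j k with rfl | hjk
      · push_cast at h
        simpa using mul_left_cancel₀ hpos h
      · rw [if_neg hjk, mul_zero] at h
        simpa [hjk] using (mul_eq_zero.1 h).resolve_left hpos

lemma integral_hermite1_sq (k : ℕ) : ∫ x, hermite1 k x ^ 2 = 1 := by
  simpa [sq] using integral_hermite1_mul k k

lemma integral_sq_pow_mul_hermite1_le (p k : ℕ) :
    ∫ x, (x ^ p * hermite1 k x) ^ 2 ≤ (2 * ((k : ℝ) + p)) ^ p := by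
  induction p generalizing k with
  | zero => simp [integral_hermite1_sq]
  | succ p ih =>
    have hup := (integrable_sq_pow_mul_hermite1 p (k + 1)).const_mul ((k : ℝ) + 1)
    have hlow := (integrable_sq_pow_mul_hermite1 p (k - 1)).const_mul (k : ℝ)
    have hpointwise (x : ℝ) : (x ^ (p + 1) * hermite1 k x) ^ 2 ≤
        (k + 1) * (x ^ p * hermite1 (k + 1) x) ^ 2 + k * (x ^ p * hermite1 (k - 1) x) ^ 2 := by
      have h := add_sq_le (a := √((k + 1) / 2) * (x ^ p * hermite1 (k + 1) x))
        (b := √(k / 2) * (x ^ p * hermite1 (k - 1) x))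
      rw [mul_pow √_, mul_pow √_, Real.sq_sqrt (by positivity), Real.sq_sqrt (by positivity)] at h
      calc _ = (x ^ p * (x * hermite1 k x)) ^ 2 := by ring
        _ = (√((k + 1) / 2) * (x ^ p * hermite1 (k + 1) x) +
              √(k / 2) * (x ^ p * hermite1 (k - 1) x)) ^ 2 := by rw [mul_hermite1]; ring
        _ ≤ _ := h.trans_eq (by ring)
    have hstep : (2 * (((k - 1 : ℕ) : ℝ) + p)) ^ p ≤ (2 * ((k + 1 : ℕ) + p)) ^ p := by
      gcongr
      omega
    calc _ ≤ ∫ x, ((k + 1) * (x ^ p * hermite1 (k + 1) x) ^ 2 +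
              k * (x ^ p * hermite1 (k - 1) x) ^ 2) :=
          integral_mono (integrable_sq_pow_mul_hermite1 _ _) (hup.add hlow) hpointwise
      _ = (k + 1) * (∫ x, (x ^ p * hermite1 (k + 1) x) ^ 2) +
            k * ∫ x, (x ^ p * hermite1 (k - 1) x) ^ 2 := by
          rw [integral_add hup hlow, integral_const_mul, integral_const_mul]
      _ ≤ (k + 1) * (2 * ((k + 1 : ℕ) + p)) ^ p + k * (2 * ((k + 1 : ℕ) + p)) ^ p := by
          gcongr
          · exact ih (k + 1)
          · exact (ih (k - 1)).trans hstep
      _ = (2 * k + 1) * (2 * ((k : ℝ) + (p + 1 : ℕ))) ^ p := by push_cast; ring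
      _ ≤ (2 * ((k : ℝ) + (p + 1 : ℕ))) * (2 * ((k : ℝ) + (p + 1 : ℕ))) ^ p := by
          gcongr
          push_cast
          linarith [p.cast_nonneg (α := ℝ)]
      _ = _ := by rw [pow_succ]; ring

lemma sq_le_integral_sq_add_integral_deriv_sq {f f' : ℝ → ℝ}
    (hderiv : ∀ x, HasDerivAt f (f' x) x) (hf : MemLp f 2) (hf' : MemLp f' 2) (x : ℝ) :
    f x ^ 2 ≤ (∫ y, f y ^ 2) + ∫ y, f' y ^ 2 := by
  have hderiv_sq (y : ℝ) : HasDerivAt (fun y => f y ^ 2) (2 * (f y * f' y)) y :=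
    ((hderiv y).pow 2).congr_deriv (by ring)
  have hint : Integrable fun y => 2 * (f y * f' y) := (hf.integrable_mul hf').const_mul 2
  have hint_sq : Integrable fun y => f y ^ 2 + f' y ^ 2 :=
    hf.integrable_sq.add hf'.integrable_sq
  have hlim := tendsto_zero_of_hasDerivAt_of_integrableOn_Iic (a := x) (fun y _ => hderiv_sq y)
    hint.integrableOn hf.integrable_sq.integrableOn
  calc f x ^ 2 = ∫ y in Set.Iic x, 2 * (f y * f' y) := by
        rw [integral_Iic_of_hasDerivAt_of_tendsto (hderiv_sq x).continuousAt.continuousWithinAt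
          (fun y _ => hderiv_sq y) hint.integrableOn hlim, sub_zero]
    _ ≤ ∫ y in Set.Iic x, (f y ^ 2 + f' y ^ 2) :=
        integral_mono hint.integrableOn hint_sq.integrableOn fun y => by
          simpa [mul_assoc] using two_mul_le_add_sq (f y) (f' y)
    _ ≤ ∫ y, (f y ^ 2 + f' y ^ 2) :=
        setIntegral_le_integral hint_sq (Filter.Eventually.of_forall fun y => by positivity)
    _ = _ := integral_add hf.integrable_sq hf'.integrable_sq

lemma abs_hermite1_le (k : ℕ) (x : ℝ) : |hermite1 k x| ≤ k + 2 := by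
  have hlow := (memLp_hermite1 (k - 1)).const_mul √(k / 2)
  have hup := (memLp_hermite1 (k + 1)).const_mul √((k + 1) / 2)
  have hlow_sq := hlow.integrable_sq.const_mul 2
  have hup_sq := hup.integrable_sq.const_mul 2
  have hderiv_sq : ∫ y, (√(k / 2) * hermite1 (k - 1) y - √((k + 1) / 2) * hermite1 (k + 1) y) ^ 2
      ≤ 2 * k + 1 := by
    calc _ ≤ ∫ y, (2 * (√(k / 2) * hermite1 (k - 1) y) ^ 2 +
              2 * (√((k + 1) / 2) * hermite1 (k + 1) y) ^ 2) :=
          integral_mono (hlow.sub hup).integrable_sq (hlow_sq.add hup_sq) fun y => by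
            simp only [Pi.sub_apply, sub_eq_add_neg]
            exact add_sq_le.trans_eq (by ring)
      _ = 2 * k + 1 := by
          simp only [mul_pow] at hlow_sq hup_sq ⊢
          rw [integral_add hlow_sq hup_sq]
          simp only [integral_const_mul, integral_hermite1_sq]
          rw [Real.sq_sqrt (by positivity), Real.sq_sqrt (by positivity)]
          ring
  have h := sq_le_integral_sq_add_integral_deriv_sq (hasDerivAt_hermite1 k) (memLp_hermite1 k)
    (hlow.sub hup) x
  rw [integral_hermite1_sq] at h
  exact abs_le_of_sq_le_sq (by nlinarith) (by positivity)

lemma deriv_hermite1 (k : ℕ) :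
    deriv (hermite1 k) =
      fun x => √(k / 2) * hermite1 (k - 1) x - √((k + 1) / 2) * hermite1 (k + 1) x :=
  funext fun x => (hasDerivAt_hermite1 k x).deriv

lemma contDiff_hermite1 (n k : ℕ) : ContDiff ℝ n (hermite1 k) := by
  induction n generalizing k with
  | zero => exact contDiff_zero.2 (continuous_hermite1 k)
  | succ n ih =>
    push_cast
    refine contDiff_succ_iff_deriv.2
      ⟨fun x => (hasDerivAt_hermite1 k x).differentiableAt, by simp, ?_⟩
    rw [deriv_hermite1]
    exact (contDiff_const.mul (ih _)).sub (contDiff_const.mul (ih _))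

lemma abs_iteratedDeriv_hermite1_le (j k : ℕ) (x : ℝ) :
    |iteratedDeriv j (hermite1 k) x| ≤ √(2 * ((k : ℝ) + j)) ^ j * ((k : ℝ) + j + 2) := by
  induction j generalizing k with
  | zero => simpa using abs_hermite1_le k x
  | succ j ih =>
    have hsmooth (c : ℝ) (l : ℕ) : ContDiffAt ℝ j (fun x => c * hermite1 l x) x :=
      (contDiff_const.mul (contDiff_hermite1 j l)).contDiffAt
    set S := √(2 * ((k : ℝ) + (j + 1 : ℕ)))
    have hbound {l : ℕ} (hl : l ≤ k + 1) :
        |iteratedDeriv j (hermite1 l) x| ≤ S ^ j * ((k : ℝ) + (j + 1 : ℕ) + 2) := by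
      have hlj : (l : ℝ) + j ≤ k + (j + 1 : ℕ) := by norm_cast; omega
      refine (ih l).trans ?_
      unfold S
      gcongr
    have hcoeff {y : ℝ} (hy : y ≤ k + 1) : √(y / 2) ≤ S / 2 := by
      have : √(2 * y) ≤ S := Real.sqrt_le_sqrt (by push_cast; linarith [j.cast_nonneg (α := ℝ)])
      linarith [sqrt_two_mul_eq y]
    rw [iteratedDeriv_succ', deriv_hermite1, iteratedDeriv_fun_sub (hsmooth _ _) (hsmooth _ _),
      iteratedDeriv_const_mul_field, iteratedDeriv_const_mul_field]
    calc _ ≤ √(k / 2) * |iteratedDeriv j (hermite1 (k - 1)) x| +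
            √((k + 1) / 2) * |iteratedDeriv j (hermite1 (k + 1)) x| := by
          refine (abs_sub _ _).trans_eq ?_
          rw [abs_mul, abs_mul, abs_of_nonneg (Real.sqrt_nonneg _),
            abs_of_nonneg (Real.sqrt_nonneg _)]
      _ ≤ S / 2 * (S ^ j * ((k : ℝ) + (j + 1 : ℕ) + 2)) +
            S / 2 * (S ^ j * ((k : ℝ) + (j + 1 : ℕ) + 2)) := by
          gcongr
          · exact hcoeff (by linarith)
          · exact hbound (by omega)
          · exact hcoeff le_rfl
          · exact hbound le_rfl
      _ = _ := by rw [pow_succ]; ring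

lemma exists_polynomial_abs_sub_eval_le {f : ℝ → ℝ} {d : ℕ} (hf : ContDiff ℝ (d + 1 : ℕ) f)
    {a b C : ℝ} (hab : a < b) (hC : ∀ y ∈ Set.Icc a b, |iteratedDeriv (d + 1) f y| ≤ C) :
    ∃ q : Polynomial ℝ, q.natDegree ≤ d ∧
      ∀ t ∈ Set.Icc a b, |f t - q.eval t| ≤ C * (b - a) ^ (d + 1) / d.factorial := by
  set c : ℕ → ℝ := fun i => (i.factorial : ℝ)⁻¹ * iteratedDerivWithin i f (Set.Icc a b) a
  refine ⟨∑ i ∈ Finset.range (d + 1), Polynomial.C (c i) * (Polynomial.X - Polynomial.C a) ^ i,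
    Polynomial.natDegree_sum_le_of_forall_le _ _ fun i hi => ?_, fun t ht => ?_⟩
  · refine (Polynomial.natDegree_C_mul_le _ _).trans ?_
    rw [Polynomial.natDegree_pow, Polynomial.natDegree_X_sub_C, mul_one]
    exact Nat.lt_succ_iff.1 (Finset.mem_range.1 hi)
  · have htaylor := taylor_mean_remainder_bound (n := d) hab.le hf.contDiffOn ht fun y hy => by
      rw [iteratedDerivWithin_eq_iteratedDeriv (uniqueDiffOn_Icc hab) hf.contDiffAt hy]
      exact hC y hy
    have heval : (∑ i ∈ Finset.range (d + 1),
        Polynomial.C (c i) * (Polynomial.X - Polynomial.C a) ^ i).eval t =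
        taylorWithinEval f d (Set.Icc a b) a t := by
      rw [taylor_within_apply, Polynomial.eval_finsetSum]
      refine Finset.sum_congr rfl fun i _ => ?_
      simp only [c, Polynomial.eval_mul, Polynomial.eval_C, Polynomial.eval_pow,
        Polynomial.eval_sub, Polynomial.eval_X, smul_eq_mul]
      ring
    have hC₀ : 0 ≤ C := (abs_nonneg _).trans (hC t ht)
    rw [heval, ← Real.norm_eq_abs]
    refine htaylor.trans ?_
    gcongr
    · linarith [ht.1]
    · exact ht.2

lemma exists_polynomial_abs_hermite1_sub_eval_le (k : ℕ) {D : ℕ} (hD : 1 ≤ D) (a : ℝ) {s : ℝ}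
    (hs : 0 < s) :
    ∃ q : Polynomial ℝ, q.natDegree ≤ D ∧ ∀ t ∈ Set.Icc a (a + s), |hermite1 k t - q.eval t| ≤
      √(2 * ((k : ℝ) + D)) ^ D * ((k : ℝ) + D + 2) * s ^ D / (D - 1).factorial := by
  obtain ⟨d, rfl⟩ := Nat.exists_eq_succ_of_ne_zero (Nat.one_le_iff_ne_zero.1 hD)
  obtain ⟨q, hdeg, hq⟩ := exists_polynomial_abs_sub_eval_le (contDiff_hermite1 (d + 1) k)
    (lt_add_of_pos_right a hs) fun y _ => abs_iteratedDeriv_hermite1_le (d + 1) k y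
  rw [add_sub_cancel_left] at hq
  exact ⟨q, hdeg.trans d.le_succ, hq⟩

/-! ### Remez inequalities -/

section Remez

variable {𝕜 : Type*} [RCLike 𝕜]

lemma exists_separated_points {h : ℝ} (hh : 0 < h) (k : ℕ) {E : Set ℝ} (hE : BddBelow E)
    (hvol : ENNReal.ofReal (2 * h * k) < volume E) :
    ∃ x : ℕ → ℝ, (∀ i ≤ k, x i ∈ E) ∧ ∀ i < k, x i + h ≤ x (i + 1) := by
  have hne : E.Nonempty := nonempty_of_measure_ne_zero (bot_lt_of_lt hvol).ne'
  induction k generalizing E with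
  | zero => exact ⟨fun _ => hne.some, fun _ _ => hne.some_mem, by simp⟩
  | succ k ih =>
    obtain ⟨y, hy, hlt⟩ := exists_lt_of_csInf_lt hne (show sInf E < sInf E + h by linarith)
    have hcover : E ⊆ Set.Icc (sInf E) (sInf E + 2 * h) ∪ E ∩ Set.Ici (y + h) := by
      intro z hz
      rcases le_or_gt (y + h) z with hyz | hyz
      · exact Or.inr ⟨hz, hyz⟩
      · exact Or.inl ⟨csInf_le hE hz, by linarith⟩
    have hvol_le : volume E ≤ ENNReal.ofReal (2 * h) + volume (E ∩ Set.Ici (y + h)) := by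
      refine (measure_mono hcover).trans ((measure_union_le _ _).trans_eq ?_)
      rw [Real.volume_Icc, add_sub_cancel_left]
    have hrest : ENNReal.ofReal (2 * h * k) < volume (E ∩ Set.Ici (y + h)) := by
      have hsplit : ENNReal.ofReal (2 * h * (k + 1 : ℕ)) =
          ENNReal.ofReal (2 * h) + ENNReal.ofReal (2 * h * k) := by
        rw [← ENNReal.ofReal_add (by positivity) (by positivity)]
        push_cast
        ring_nf
      exact (ENNReal.add_lt_add_iff_left ENNReal.ofReal_ne_top).1 (hsplit ▸ hvol.trans_le hvol_le)
    obtain ⟨x, hx, hsep⟩ := ih (hE.mono Set.inter_subset_left) hrest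
      (nonempty_of_measure_ne_zero (bot_lt_of_lt hrest).ne')
    refine ⟨fun i => Nat.casesOn i y x, fun i hi => ?_, fun i hi => ?_⟩
    · rcases i with _ | i
      · exact hy
      · exact (hx i (by omega)).1
    · rcases i with _ | i
      · exact (hx 0 k.zero_le).2
      · exact hsep i (by omega)

lemma mul_abs_sub_le_abs_sub_of_add_le_succ {x : ℕ → ℝ} {h : ℝ} {k : ℕ}
    (hsep : ∀ i < k, x i + h ≤ x (i + 1)) {i j : ℕ} (hi : i ≤ k) (hj : j ≤ k) :
    h * |(i : ℝ) - j| ≤ |x i - x j| := by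
  wlog hij : i ≤ j generalizing i j
  · rw [abs_sub_comm, abs_sub_comm (x i)]
    exact this hj hi (by omega)
  obtain ⟨d, rfl⟩ := Nat.exists_eq_add_of_le hij
  have hgap : x i + h * d ≤ x (i + d) := by
    induction d with
    | zero => simp
    | succ d ih =>
      have hstep := hsep (i + d) (by omega)
      have := ih (by omega) (by omega)
      rw [← add_assoc]
      push_cast
      linarith
  rw [abs_sub_comm, Nat.cast_add, add_sub_cancel_left, Nat.abs_cast, abs_sub_comm]
  exact (by linarith : h * d ≤ x (i + d) - x i).trans (le_abs_self _)

lemma prod_erase_range_abs_sub {D i : ℕ} (hi : i ≤ D) :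
    ∏ j ∈ (Finset.range (D + 1)).erase i, |(i : ℝ) - j| = i.factorial * (D - i).factorial := by
  have hsplit : (Finset.range (D + 1)).erase i =
      Finset.range i ∪ Finset.Ico (i + 1) (D + 1) := by
    ext j
    simp only [Finset.mem_erase, Finset.mem_range, Finset.mem_union, Finset.mem_Ico]
    omega
  have hdisj : Disjoint (Finset.range i) (Finset.Ico (i + 1) (D + 1)) := by
    rw [Finset.disjoint_left]
    intro j
    simp only [Finset.mem_range, Finset.mem_Ico]
    omega
  rw [hsplit, Finset.prod_union hdisj]
  congr 1
  · rw [← Finset.prod_range_reflect, ← Finset.prod_range_add_one_eq_factorial, Nat.cast_prod]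
    refine Finset.prod_congr rfl fun j hj => ?_
    have hj := Finset.mem_range.1 hj
    rw [show i - 1 - j = i - (j + 1) by omega, Nat.cast_sub (by omega), sub_sub_cancel,
      Nat.abs_cast]
  · rw [Finset.prod_Ico_eq_prod_range, ← Finset.prod_range_add_one_eq_factorial, Nat.cast_prod,
      Nat.add_sub_add_right]
    refine Finset.prod_congr rfl fun j _ => ?_
    rw [abs_sub_comm, add_assoc, Nat.cast_add, add_sub_cancel_left, Nat.abs_cast, add_comm]

lemma norm_eval_lagrangeBasis_le {x : ℕ → ℝ} {a b h : ℝ} {D : ℕ} (hh : 0 < h)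
    (hx : ∀ i ≤ D, x i ∈ Set.Icc a b) (hsep : ∀ i < D, x i + h ≤ x (i + 1)) {i : ℕ} (hi : i ≤ D)
    {t : ℝ} (ht : t ∈ Set.Icc a b) :
    ‖(Lagrange.basis (Finset.range (D + 1)) (fun i => (x i : 𝕜)) i).eval (t : 𝕜)‖ ≤
      ((b - a) / h) ^ D / D.factorial * D.choose i := by
  have hfactor : ∀ j ∈ (Finset.range (D + 1)).erase i,
      ‖(Lagrange.basisDivisor (x i : 𝕜) (x j : 𝕜)).eval (t : 𝕜)‖ ≤
        (b - a) / h / |(i : ℝ) - j| := by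
    intro j hj
    obtain ⟨hji, hj⟩ := Finset.mem_erase.1 hj
    have hjD := Nat.lt_succ_iff.1 (Finset.mem_range.1 hj)
    have hij : 0 < |(i : ℝ) - j| := abs_pos.2 (sub_ne_zero.2 (by exact_mod_cast hji.symm))
    have hdist := mul_abs_sub_le_abs_sub_of_add_le_succ hsep hi hjD
    have hlen : |t - x j| ≤ b - a := abs_sub_le_of_le_of_le ht.1 ht.2 (hx j hjD).1 (hx j hjD).2
    rw [Lagrange.basisDivisor, Polynomial.eval_mul, Polynomial.eval_C, Polynomial.eval_sub,
      Polynomial.eval_X, Polynomial.eval_C, ← RCLike.ofReal_sub, ← RCLike.ofReal_sub, norm_mul,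
      norm_inv, RCLike.norm_ofReal, RCLike.norm_ofReal, inv_mul_eq_div, div_div]
    exact div_le_div₀ ((abs_nonneg _).trans hlen) hlen (mul_pos hh hij) hdist
  calc _ = ∏ j ∈ (Finset.range (D + 1)).erase i,
          ‖(Lagrange.basisDivisor (x i : 𝕜) (x j : 𝕜)).eval (t : 𝕜)‖ := by
        rw [Lagrange.basis, Polynomial.eval_prod, norm_prod]
    _ ≤ ∏ j ∈ (Finset.range (D + 1)).erase i, (b - a) / h / |(i : ℝ) - j| :=
        Finset.prod_le_prod (fun _ _ => norm_nonneg _) hfactor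
    _ = ((b - a) / h) ^ D / (i.factorial * (D - i).factorial) := by
        rw [Finset.prod_div_distrib, prod_erase_range_abs_sub hi, Finset.prod_const,
          Finset.card_erase_of_mem (Finset.mem_range.2 (by omega)), Finset.card_range,
          Nat.add_sub_cancel]
    _ = _ := by
        rw [Nat.cast_choose ℝ hi]
        field_simp

lemma norm_eval_le_of_separated_points {p : Polynomial 𝕜} {D : ℕ} (hp : p.natDegree ≤ D)
    {x : ℕ → ℝ} {a b h M : ℝ} (hh : 0 < h) (hx : ∀ i ≤ D, x i ∈ Set.Icc a b)
    (hsep : ∀ i < D, x i + h ≤ x (i + 1)) (hM : ∀ i ≤ D, ‖p.eval (x i : 𝕜)‖ ≤ M) {t : ℝ}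
    (ht : t ∈ Set.Icc a b) :
    ‖p.eval (t : 𝕜)‖ ≤ (2 * ((b - a) / h)) ^ D / D.factorial * M := by
  have hinj : Set.InjOn (fun i => (x i : 𝕜)) (Finset.range (D + 1)) := by
    intro i hi j hj hij
    have hi := Nat.lt_succ_iff.1 (Finset.mem_range.1 (Finset.mem_coe.1 hi))
    have hj := Nat.lt_succ_iff.1 (Finset.mem_range.1 (Finset.mem_coe.1 hj))
    have hdist := mul_abs_sub_le_abs_sub_of_add_le_succ hsep hi hj
    rw [RCLike.ofReal_injective hij, sub_self, abs_zero] at hdist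
    have habs := abs_nonpos_iff.1 (nonpos_of_mul_nonpos_right hdist hh)
    exact_mod_cast sub_eq_zero.1 habs
  have hdeg : p.degree < (Finset.range (D + 1)).card := by
    rw [Finset.card_range]
    exact Polynomial.degree_le_natDegree.trans_lt (by exact_mod_cast Nat.lt_succ_of_le hp)
  have hM₀ : 0 ≤ M := (norm_nonneg _).trans (hM 0 D.zero_le)
  rw [Lagrange.eq_interpolate hinj hdeg, Lagrange.interpolate_apply, Polynomial.eval_finsetSum]
  calc _ ≤ ∑ i ∈ Finset.range (D + 1),
          M * (((b - a) / h) ^ D / D.factorial * D.choose i) := by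
        refine norm_sum_le_of_le _ fun i hi => ?_
        have hi := Nat.lt_succ_iff.1 (Finset.mem_range.1 hi)
        rw [Polynomial.eval_mul, Polynomial.eval_C, norm_mul]
        exact mul_le_mul (hM i hi) (norm_eval_lagrangeBasis_le hh hx hsep hi ht) (norm_nonneg _) hM₀
    _ = _ := by
        rw [← Finset.mul_sum, ← Finset.mul_sum, ← Nat.cast_sum, Nat.sum_range_choose, mul_pow]
        push_cast
        ring

-- Interpolate `p` at `D + 1` points of `E` whose gaps are a fixed fraction of `θ (b - a) / D`.
theorem remez_inequality {p : Polynomial 𝕜} {D : ℕ} (hp : p.natDegree ≤ D) {a b θ M : ℝ}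
    (hab : a < b) (hθ : 0 < θ) {E : Set ℝ} (hE : E ⊆ Set.Icc a b)
    (hvol : ENNReal.ofReal θ * volume (Set.Icc a b) ≤ volume E)
    (hM : ∀ t ∈ E, ‖p.eval (t : 𝕜)‖ ≤ M) {t : ℝ} (ht : t ∈ Set.Icc a b) :
    ‖p.eval (t : 𝕜)‖ ≤ (8 * Real.exp 1 / θ) ^ D * M := by
  have hba : 0 < b - a := sub_pos.2 hab
  rw [Real.volume_Icc, ← ENNReal.ofReal_mul hθ.le] at hvol
  have hE₀ : 0 < volume E := (ENNReal.ofReal_pos.2 (mul_pos hθ hba)).trans_le hvol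
  obtain ⟨y, hy⟩ := nonempty_of_measure_ne_zero hE₀.ne'
  have hM₀ : 0 ≤ M := (norm_nonneg _).trans (hM y hy)
  rcases D.eq_zero_or_pos with rfl | hD
  · rw [Polynomial.eq_C_of_natDegree_le_zero hp] at hM ⊢
    simpa using hM y hy
  have hDpos : (0 : ℝ) < D := Nat.cast_pos.2 hD
  set h := θ * (b - a) / (4 * D) with h_def
  have hh : 0 < h := by positivity
  have hgap : ENNReal.ofReal (2 * h * D) < volume E := by
    refine ((ENNReal.ofReal_lt_ofReal_iff (by positivity)).2 ?_).trans_le hvol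
    rw [h_def]
    field_simp
    norm_num
  obtain ⟨x, hxE, hsep⟩ := exists_separated_points hh D ⟨a, fun z hz => (hE hz).1⟩ hgap
  have hratio : 2 * ((b - a) / h) = 8 / θ * D := by
    rw [h_def]
    field_simp
    norm_num
  calc _ ≤ (2 * ((b - a) / h)) ^ D / D.factorial * M :=
        norm_eval_le_of_separated_points hp hh (fun i hi => hE (hxE i hi)) hsep
          (fun i hi => hM _ (hxE i hi)) ht
    _ = (8 / θ) ^ D * ((D : ℝ) ^ D / D.factorial) * M := by rw [hratio]; ring
    _ ≤ (8 / θ) ^ D * Real.exp D * M := by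
        gcongr
        exact Real.pow_div_factorial_le_exp (D : ℝ) hDpos.le D
    _ = _ := by
        rw [← Real.exp_one_pow, ← mul_pow]
        ring

lemma mul_measure_le_measure_fiber {α β : Type*} [MeasurableSpace α] [MeasurableSpace β]
    {μ : Measure α} {ν : Measure β} [SFinite μ] [SFinite ν] {I : Set α} {B : Set β}
    {S : Set (α × β)} {θ : ℝ≥0∞} (hθ : θ ≠ ∞) (hI₀ : μ I ≠ 0) (hI : μ I ≠ ∞) (hB : ν B ≠ ∞)
    (hBm : MeasurableSet B) (hSm : MeasurableSet S) (hS : S ⊆ I ×ˢ B)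
    (hvol : 2 * θ * (μ I * ν B) ≤ μ.prod ν S) :
    θ * ν B ≤ ν (B ∩ {y | θ * μ I ≤ μ ((fun t => (t, y)) ⁻¹' S)}) := by
  set g : β → ℝ≥0∞ := fun y => μ ((fun t => (t, y)) ⁻¹' S)
  have hgm : Measurable g := measurable_measure_prodMk_right hSm
  set G := B ∩ {y | θ * μ I ≤ g y}
  have hGm : MeasurableSet G := hBm.inter (measurableSet_le measurable_const hgm)
  have hg (y : β) : g y ≤ G.indicator (fun _ => μ I) y + B.indicator (fun _ => θ * μ I) y := by
    by_cases hyB : y ∈ B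
    · by_cases hy : θ * μ I ≤ g y
      · rw [Set.indicator_of_mem (show y ∈ G from ⟨hyB, hy⟩)]
        exact le_add_right (measure_mono fun t ht => (hS ht).1)
      · rw [Set.indicator_of_mem hyB]
        exact le_add_left (not_le.1 hy).le
    · have : (fun t => (t, y)) ⁻¹' S = ∅ :=
        Set.eq_empty_of_forall_notMem fun t ht => hyB (hS ht).2
      simp [g, this]
  have hsum : θ * (μ I * ν B) + θ * (μ I * ν B) ≤ μ I * ν G + θ * (μ I * ν B) := by
    calc _ = 2 * θ * (μ I * ν B) := by ring
      _ ≤ ∫⁻ y, g y ∂ν := by rwa [← Measure.prod_apply_symm hSm]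
      _ ≤ _ := lintegral_mono hg
      _ = μ I * ν G + θ * (μ I * ν B) := by
          rw [lintegral_add_left (measurable_const.indicator hGm), lintegral_indicator_const hGm,
            lintegral_indicator_const hBm, mul_assoc]
  have hcancel := (ENNReal.add_le_add_iff_right
    (ENNReal.mul_ne_top hθ (ENNReal.mul_ne_top hI hB))).1 hsum
  rw [mul_left_comm] at hcancel
  exact (ENNReal.mul_le_mul_iff_right hI₀ hI).1 hcancel

/-- A function of finitely many real variables which is, in each variable separately, a polynomial
of degree at most `D` (with coefficients depending on the other variables). -/
def IsSeparatelyPolynomial {ι : Type*} [DecidableEq ι] (D : ℕ) (F : (ι → ℝ) → 𝕜) : Prop :=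
  ∀ (x : ι → ℝ) (j : ι), ∃ p : Polynomial 𝕜, p.natDegree ≤ D ∧
    ∀ t : ℝ, F (Function.update x j t) = p.eval (t : 𝕜)

/-- The growth factor per degree in the `n`-dimensional Remez inequality, for subsets of relative
volume `θ`. -/
def remezConst (n : ℕ) (θ : ℝ) : ℝ := (2 ^ n * (8 * Real.exp 1) / θ) ^ n

lemma one_le_remezConst (n : ℕ) {θ : ℝ} (hθ : 0 < θ) (hθ₁ : θ ≤ 1) : 1 ≤ remezConst n θ := by
  refine one_le_pow₀ ((one_le_div hθ).2 (hθ₁.trans ?_))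
  exact one_le_mul_of_one_le_of_one_le (one_le_pow₀ one_le_two)
    (by linarith [Real.one_le_exp zero_le_one])

lemma mul_remezConst_half_le (n : ℕ) {θ : ℝ} (hθ : 0 < θ) :
    8 * Real.exp 1 / (θ / 2) * remezConst n (θ / 2) ≤ remezConst (n + 1) θ := by
  have hbase : 8 * Real.exp 1 / (θ / 2) ≤ 2 ^ (n + 1) * (8 * Real.exp 1) / θ := by
    rw [pow_succ, show 8 * Real.exp 1 / (θ / 2) = 1 * 2 * (8 * Real.exp 1) / θ by field_simp]
    gcongr
    exact one_le_pow₀ one_le_two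
  have hconst : remezConst n (θ / 2) = (2 ^ (n + 1) * (8 * Real.exp 1) / θ) ^ n := by
    rw [remezConst]
    congr 1
    field_simp
    ring
  rw [hconst, remezConst, pow_succ' (2 ^ (n + 1) * (8 * Real.exp 1) / θ)]
  exact mul_le_mul_of_nonneg_right hbase (by positivity)

lemma measurePreserving_finCons (n : ℕ) :
    MeasurePreserving fun p : ℝ × (Fin n → ℝ) => (Fin.cons p.1 p.2 : Fin (n + 1) → ℝ) := by
  convert (volume_preserving_piFinSuccAbove (fun _ : Fin (n + 1) => ℝ) 0).symm using 1
  ext p i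
  simp [MeasurableEquiv.piFinSuccAbove]

lemma volume_Icc_eq_mul_volume_Icc_tail {n : ℕ} (a b : Fin (n + 1) → ℝ) :
    volume (Set.Icc a b) =
      volume (Set.Icc (a 0) (b 0)) * volume (Set.Icc (Fin.tail a) (Fin.tail b)) := by
  rw [Real.volume_Icc_pi, Real.volume_Icc_pi, Real.volume_Icc, Fin.prod_univ_succ]
  rfl

lemma finCons_mem_Icc {n : ℕ} {a b : Fin (n + 1) → ℝ} {t : ℝ} {y : Fin n → ℝ} :
    (Fin.cons t y : Fin (n + 1) → ℝ) ∈ Set.Icc a b ↔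
      t ∈ Set.Icc (a 0) (b 0) ∧ y ∈ Set.Icc (Fin.tail a) (Fin.tail b) := by
  rw [Set.mem_Icc, Fin.le_cons, Fin.cons_le, Set.mem_Icc, Set.mem_Icc, and_and_and_comm]

lemma IsSeparatelyPolynomial.finCons {n D : ℕ} {F : (Fin (n + 1) → ℝ) → 𝕜}
    (hF : IsSeparatelyPolynomial D F) (t : ℝ) :
    IsSeparatelyPolynomial D fun y : Fin n → ℝ => F (Fin.cons t y) := fun y j => by
  obtain ⟨p, hp, hFp⟩ := hF (Fin.cons t y) j.succ
  exact ⟨p, hp, fun u => by simp only [← hFp u, Fin.cons_update]⟩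

lemma volume_Icc_pos {ι : Type*} [Fintype ι] {a b : ι → ℝ} (hab : ∀ i, a i < b i) :
    0 < volume (Set.Icc a b) := by
  rw [Real.volume_Icc_pi]
  exact CanonicallyOrderedAdd.prod_pos.2 fun i _ => ENNReal.ofReal_pos.2 (sub_pos.2 (hab i))

lemma nonempty_of_mul_volume_Icc_le {ι : Type*} [Fintype ι] {a b : ι → ℝ} (hab : ∀ i, a i < b i)
    {θ : ℝ} (hθ : 0 < θ) {E : Set (ι → ℝ)}
    (hvol : ENNReal.ofReal θ * volume (Set.Icc a b) ≤ volume E) : E.Nonempty :=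
  nonempty_of_measure_ne_zero <| ne_bot_of_le_ne_bot
    (mul_ne_zero (ENNReal.ofReal_pos.2 hθ).ne' (volume_Icc_pos hab).ne') hvol

lemma exists_large_fibers_of_mul_volume_Icc_le {n : ℕ} {θ : ℝ} {a b : Fin (n + 1) → ℝ}
    (hab : a 0 < b 0) {E : Set (Fin (n + 1) → ℝ)} (hEm : MeasurableSet E) (hE : E ⊆ Set.Icc a b)
    (hvol : ENNReal.ofReal θ * volume (Set.Icc a b) ≤ volume E) :
    ∃ G ⊆ Set.Icc (Fin.tail a) (Fin.tail b), MeasurableSet G ∧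
      ENNReal.ofReal (θ / 2) * volume (Set.Icc (Fin.tail a) (Fin.tail b)) ≤ volume G ∧
      ∀ y ∈ G, ENNReal.ofReal (θ / 2) * volume (Set.Icc (a 0) (b 0)) ≤
        volume {t | (Fin.cons t y : Fin (n + 1) → ℝ) ∈ E} := by
  set I := Set.Icc (a 0) (b 0)
  set B := Set.Icc (Fin.tail a) (Fin.tail b)
  have hI₀ : volume I ≠ 0 := by simpa [I] using hab
  set S := (fun p : ℝ × (Fin n → ℝ) => (Fin.cons p.1 p.2 : Fin (n + 1) → ℝ)) ⁻¹' E
  have hSm : MeasurableSet S := (measurePreserving_finCons n).measurable hEm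
  have hS : S ⊆ I ×ˢ B := fun p hp => finCons_mem_Icc.1 (hE hp)
  have hvolS : 2 * ENNReal.ofReal (θ / 2) * (volume I * volume B) ≤ volume S := by
    rwa [(measurePreserving_finCons n).measure_preimage hEm.nullMeasurableSet,
      ← volume_Icc_eq_mul_volume_Icc_tail, ← ENNReal.ofReal_ofNat 2,
      ← ENNReal.ofReal_mul zero_le_two, mul_div_cancel₀ θ two_ne_zero]
  exact ⟨B ∩ {y | ENNReal.ofReal (θ / 2) * volume I ≤ volume ((fun t => (t, y)) ⁻¹' S)},
    Set.inter_subset_left,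
    measurableSet_Icc.inter
      (measurableSet_le measurable_const (measurable_measure_prodMk_right hSm)),
    mul_measure_le_measure_fiber ENNReal.ofReal_ne_top hI₀ measure_Icc_lt_top.ne
      measure_Icc_lt_top.ne measurableSet_Icc hSm hS hvolS,
    fun y hy => hy.2⟩

-- Induction on the dimension: by Fubini, `E` has large one-dimensional fibres over a large set.
theorem IsSeparatelyPolynomial.norm_le_remezConst_pow_mul {n D : ℕ} {F : (Fin n → ℝ) → 𝕜}
    (hF : IsSeparatelyPolynomial D F) {θ : ℝ} (hθ : 0 < θ) {a b : Fin n → ℝ}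
    (hab : ∀ i, a i < b i) {E : Set (Fin n → ℝ)} (hEm : MeasurableSet E) (hE : E ⊆ Set.Icc a b)
    (hvol : ENNReal.ofReal θ * volume (Set.Icc a b) ≤ volume E) {M : ℝ}
    (hM : ∀ x ∈ E, ‖F x‖ ≤ M) {x : Fin n → ℝ} (hx : x ∈ Set.Icc a b) :
    ‖F x‖ ≤ remezConst n θ ^ D * M := by
  induction n generalizing θ M with
  | zero =>
    obtain ⟨w, hw⟩ := nonempty_of_mul_volume_Icc_le hab hθ hvol
    simpa [remezConst, Subsingleton.elim x w] using hM w hw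
  | succ n ih =>
    obtain ⟨w, hw⟩ := nonempty_of_mul_volume_Icc_le hab hθ hvol
    have hM₀ : 0 ≤ M := (norm_nonneg _).trans (hM w hw)
    obtain ⟨t, y, rfl⟩ : ∃ t y, Fin.cons t y = x := ⟨x 0, Fin.tail x, Fin.cons_self_tail x⟩
    obtain ⟨ht, hy⟩ := finCons_mem_Icc.1 hx
    obtain ⟨G, hGB, hGm, hG, hfibers⟩ :=
      exists_large_fibers_of_mul_volume_Icc_le (hab 0) hEm hE hvol
    have hfiber : ∀ z ∈ G, ‖F (Fin.cons t z)‖ ≤ (8 * Real.exp 1 / (θ / 2)) ^ D * M := by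
      intro z hz
      obtain ⟨p, hp, hFp⟩ := hF (Fin.cons t z) 0
      simp only [Fin.update_cons_zero] at hFp
      rw [hFp]
      exact remez_inequality hp (hab 0) (half_pos hθ) (fun u hu => (finCons_mem_Icc.1 (hE hu)).1)
        (hfibers z hz) (fun u hu => hFp u ▸ hM _ hu) ht
    calc ‖F (Fin.cons t y)‖
        ≤ remezConst n (θ / 2) ^ D * ((8 * Real.exp 1 / (θ / 2)) ^ D * M) :=
          ih (hF.finCons t) (half_pos hθ) (fun i => hab i.succ) hGm hGB hG hfiber hy
      _ = (8 * Real.exp 1 / (θ / 2) * remezConst n (θ / 2)) ^ D * M := by ring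
      _ ≤ remezConst (n + 1) θ ^ D * M := by
          have : 0 ≤ remezConst n (θ / 2) := by unfold remezConst; positivity
          gcongr
          exact mul_remezConst_half_le n hθ

end Remez

/-! ### Thick sets and local estimates on cubes -/

section Cube

variable {ι : Type*} {a : ι → ℝ} {s : ℝ}

/-- The cube with lowest corner `a` and side `s`, half-open so that the cubes of a grid partition
the space. -/
def halfOpenCube (a : ι → ℝ) (s : ℝ) : Set (ι → ℝ) :=
  Set.univ.pi fun i => Set.Ico (a i) (a i + s)

lemma mem_halfOpenCube {x : ι → ℝ} : x ∈ halfOpenCube a s ↔ ∀ i, a i ≤ x i ∧ x i < a i + s :=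
  Set.mem_univ_pi

lemma halfOpenCube_subset_Icc : halfOpenCube a s ⊆ Set.Icc a fun i => a i + s := fun _ hx =>
  ⟨fun i => (mem_halfOpenCube.1 hx i).1, fun i => (mem_halfOpenCube.1 hx i).2.le⟩

lemma halfOpenCube_natCast_mul_eq_iUnion (a : ι → ℝ) (hs : 0 < s) (J : ℕ) :
    halfOpenCube a (J * s) =
      ⋃ m : ι → Fin J, halfOpenCube (fun i => a i + (m i : ℕ) * s) s := by
  unfold halfOpenCube
  rw [Set.iUnion_univ_pi fun i (k : Fin J) => Set.Ico (a i + (k : ℕ) * s) (a i + (k : ℕ) * s + s)]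
  congr 1 with i x
  simp only [Set.mem_iUnion, Set.mem_Ico]
  constructor
  · rintro ⟨hax, hxJ⟩
    have hquot : 0 ≤ (x - a i) / s := div_nonneg (sub_nonneg.2 hax) hs.le
    have hfloor : (⌊(x - a i) / s⌋₊ : ℝ) * s ≤ x - a i := (le_div_iff₀ hs).1 (Nat.floor_le hquot)
    have hlt : x - a i < (⌊(x - a i) / s⌋₊ + 1) * s :=
      (div_lt_iff₀ hs).1 (Nat.lt_floor_add_one _)
    refine ⟨⟨⌊(x - a i) / s⌋₊, (Nat.floor_lt hquot).2 ((div_lt_iff₀ hs).2 ?_)⟩, ?_, ?_⟩ <;> linarith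
  · rintro ⟨k, hk, hk'⟩
    have hkJ : ((k : ℕ) + 1 : ℝ) * s ≤ J * s := by gcongr; exact_mod_cast k.2
    have hk₀ : 0 ≤ ((k : ℕ) : ℝ) * s := by positivity
    constructor <;> linarith

lemma pairwise_disjoint_halfOpenCube (a : ι → ℝ) (s : ℝ) (J : ℕ) :
    Pairwise (Function.onFun Disjoint
      fun m : ι → Fin J => halfOpenCube (fun i => a i + (m i : ℕ) * s) s) := fun m m' hmm' => by
  obtain ⟨i, hi⟩ := Function.ne_iff.1 hmm'
  refine Set.disjoint_univ_pi.2 ⟨i, ?_⟩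
  have hdisj := Set.pairwise_disjoint_Ico_add_zsmul (a i) s
    (Nat.cast_injective.ne (Fin.val_injective.ne hi) : ((m i : ℕ) : ℤ) ≠ (m' i : ℕ))
  simpa [Function.onFun, add_mul, add_assoc] using hdisj

lemma measurableSet_halfOpenCube [Countable ι] : MeasurableSet (halfOpenCube a s) :=
  MeasurableSet.univ_pi fun _ => measurableSet_Ico

variable [Fintype ι]

lemma volume_halfOpenCube : volume (halfOpenCube a s) = ENNReal.ofReal s ^ Fintype.card ι := by
  simp [halfOpenCube, volume_pi_pi]

lemma volume_halfOpenCube_ne_top : volume (halfOpenCube a s) ≠ ∞ := by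
  simp [volume_halfOpenCube]

lemma volume_real_halfOpenCube (hs : 0 ≤ s) :
    volume.real (halfOpenCube a s) = s ^ Fintype.card ι := by
  simp [Measure.real, volume_halfOpenCube, hs]

lemma volume_halfOpenCube_eq_two_pow_mul (a b : ι → ℝ) (s : ℝ) :
    volume (halfOpenCube a s) = 2 ^ Fintype.card ι * volume (halfOpenCube b (s / 2)) := by
  rw [volume_halfOpenCube, volume_halfOpenCube, ← mul_pow, ← ENNReal.ofReal_ofNat 2,
    ← ENNReal.ofReal_mul zero_le_two, mul_div_cancel₀ s two_ne_zero]

lemma volume_Icc_eq_volume_halfOpenCube :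
    volume (Set.Icc a fun i => a i + s) = volume (halfOpenCube a s) := by
  simp [Real.volume_Icc_pi, volume_halfOpenCube]

lemma setIntegral_halfOpenCube_le_of_grid {g : (ι → ℝ) → ℝ} (hg : Integrable g) (hg₀ : 0 ≤ g)
    {ω : Set (ι → ℝ)} (hω : MeasurableSet ω) (hs : 0 < s) {J : ℕ} {B E : ℝ} (hB : 0 ≤ B)
    (hgrid : ∀ m : ι → Fin J, ∫ x in halfOpenCube (fun i => a i + (m i : ℕ) * s) s, g x ≤
      B * (∫ x in ω ∩ halfOpenCube (fun i => a i + (m i : ℕ) * s) s, g x) +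
        E * s ^ Fintype.card ι) :
    ∫ x in halfOpenCube a (J * s), g x ≤
      B * (∫ x in ω, g x) + E * (J * s) ^ Fintype.card ι := by
  classical
  have hdisj := pairwise_disjoint_halfOpenCube a s J
  set Q : (ι → Fin J) → Set (ι → ℝ) := fun m => halfOpenCube (fun i => a i + (m i : ℕ) * s) s
  have hω_sum : ∑ m, ∫ x in ω ∩ Q m, g x ≤ ∫ x in ω, g x := by
    rw [← integral_iUnion_fintype (fun m => hω.inter measurableSet_halfOpenCube)
      (fun m m' h => (hdisj h).mono Set.inter_subset_right Set.inter_subset_right)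
      fun m => hg.integrableOn]
    exact setIntegral_mono_set hg.integrableOn (.of_forall hg₀)
      (Set.iUnion_subset fun m => Set.inter_subset_left).eventuallyLE
  rw [halfOpenCube_natCast_mul_eq_iUnion a hs,
    integral_iUnion_fintype (fun m => measurableSet_halfOpenCube) hdisj fun m => hg.integrableOn]
  calc ∑ m, ∫ x in Q m, g x
      ≤ ∑ m, (B * (∫ x in ω ∩ Q m, g x) + E * s ^ Fintype.card ι) :=
        Finset.sum_le_sum fun m _ => hgrid m
    _ = B * ∑ m, (∫ x in ω ∩ Q m, g x) + E * (J * s) ^ Fintype.card ι := by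
        simp only [Finset.sum_add_distrib, Finset.mul_sum, Finset.sum_const, Finset.card_univ,
          Fintype.card_fun, Fintype.card_fin, nsmul_eq_mul, Nat.cast_pow]
        ring
    _ ≤ B * (∫ x in ω, g x) + E * (J * s) ^ Fintype.card ι := by gcongr

end Cube

lemma measure_le_two_mul_measure_inter_sublevel {α : Type*} [MeasurableSpace α] {μ : Measure α}
    {A : Set α} (hA : μ A ≠ ∞) {g : α → ℝ} (hgm : Measurable g) (hg₀ : 0 ≤ g)
    (hg : IntegrableOn g A μ) {τ : ℝ} (hτ : 2 * ∫ x in A, g x ∂μ < τ * μ.real A) :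
    μ A ≤ 2 * μ (A ∩ {x | g x ≤ τ}) := by
  have hlevel : MeasurableSet {x | g x ≤ τ} := measurableSet_le hgm measurable_const
  have hI : 0 ≤ ∫ x in A, g x ∂μ := integral_nonneg hg₀
  have hτ₀ : 0 < τ := pos_of_mul_pos_left (by linarith) measureReal_nonneg
  have hmarkov : τ * μ.real (A \ {x | g x ≤ τ}) ≤ ∫ x in A, g x ∂μ := by
    refine le_trans ?_ (mul_meas_ge_le_integral_of_nonneg (.of_forall hg₀) hg τ)
    rw [measureReal_restrict_apply (measurableSet_le measurable_const hgm)]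
    gcongr
    · exact measure_ne_top_of_subset Set.inter_subset_right hA
    · exact fun x hx => ⟨(not_le.1 (show ¬g x ≤ τ from hx.2)).le, hx.1⟩
  have hsplit := measureReal_inter_add_sdiff (s := A) hlevel hA
  have hle : μ.real A ≤ 2 * μ.real (A ∩ {x | g x ≤ τ}) := by
    by_contra! hlt
    nlinarith
  have hfin : μ (A ∩ {x | g x ≤ τ}) ≠ ∞ := measure_ne_top_of_subset Set.inter_subset_left hA
  rwa [← ENNReal.toReal_le_toReal hA (ENNReal.mul_ne_top ENNReal.ofNat_ne_top hfin),
    ENNReal.toReal_mul]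

section LocalEstimate

variable {𝕜 : Type*} [RCLike 𝕜] {n D : ℕ} {F P : (Fin n → ℝ) → 𝕜} {θ η : ℝ}

lemma IsSeparatelyPolynomial.norm_le_of_norm_sub_le (hP : IsSeparatelyPolynomial D P) (hθ : 0 < θ)
    (hθ₁ : θ ≤ 1) {a b : Fin n → ℝ} (hab : ∀ i, a i < b i)
    (hFP : ∀ x ∈ Set.Icc a b, ‖F x - P x‖ ≤ η) {E : Set (Fin n → ℝ)} (hEm : MeasurableSet E)
    (hE : E ⊆ Set.Icc a b) (hvol : ENNReal.ofReal θ * volume (Set.Icc a b) ≤ volume E) {M : ℝ}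
    (hM : ∀ x ∈ E, ‖F x‖ ≤ M) {x : Fin n → ℝ} (hx : x ∈ Set.Icc a b) :
    ‖F x‖ ≤ remezConst n θ ^ D * (M + 2 * η) := by
  have hPE : ∀ y ∈ E, ‖P y‖ ≤ M + η := fun y hy =>
    (norm_le_norm_add_norm_sub (F y) (P y)).trans (add_le_add (hM y hy) (hFP y (hE hy)))
  have hη : 0 ≤ η := (norm_nonneg _).trans (hFP x hx)
  calc ‖F x‖ ≤ ‖P x‖ + ‖F x - P x‖ := norm_le_norm_add_norm_sub' _ _
    _ ≤ remezConst n θ ^ D * (M + η) + remezConst n θ ^ D * η :=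
        add_le_add (hP.norm_le_remezConst_pow_mul hθ hab hEm hE hvol hPE hx)
          ((hFP x hx).trans
            (le_mul_of_one_le_left hη (one_le_pow₀ (one_le_remezConst n hθ hθ₁))))
    _ = remezConst n θ ^ D * (M + 2 * η) := by ring

lemma IsSeparatelyPolynomial.norm_sq_le_of_norm_sub_le (hP : IsSeparatelyPolynomial D P)
    (hθ : 0 < θ) (hθ₁ : θ ≤ 1) {a b : Fin n → ℝ} (hab : ∀ i, a i < b i)
    (hFP : ∀ x ∈ Set.Icc a b, ‖F x - P x‖ ≤ η) {E : Set (Fin n → ℝ)} (hEm : MeasurableSet E)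
    (hE : E ⊆ Set.Icc a b) (hvol : ENNReal.ofReal θ * volume (Set.Icc a b) ≤ volume E) {τ : ℝ}
    (hτ : 0 ≤ τ) (hEτ : ∀ x ∈ E, ‖F x‖ ^ 2 ≤ τ) {x : Fin n → ℝ} (hx : x ∈ Set.Icc a b) :
    ‖F x‖ ^ 2 ≤ (remezConst n θ ^ D) ^ 2 * (2 * τ + 8 * η ^ 2) := by
  have hle : ‖F x‖ ≤ remezConst n θ ^ D * (√τ + 2 * η) :=
    hP.norm_le_of_norm_sub_le hθ hθ₁ hab hFP hEm hE hvol
      (fun y hy => Real.le_sqrt_of_sq_le (hEτ y hy)) hx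
  calc ‖F x‖ ^ 2 ≤ (remezConst n θ ^ D) ^ 2 * (√τ + 2 * η) ^ 2 := by rw [← mul_pow]; gcongr
    _ ≤ (remezConst n θ ^ D) ^ 2 * (2 * (√τ ^ 2 + (2 * η) ^ 2)) := by gcongr; exact add_sq_le
    _ = (remezConst n θ ^ D) ^ 2 * (2 * τ + 8 * η ^ 2) := by rw [Real.sq_sqrt hτ]; ring

theorem IsSeparatelyPolynomial.setIntegral_norm_sq_le (hP : IsSeparatelyPolynomial D P)
    (hF : Continuous F) (hθ : 0 < θ) (hθ₁ : θ ≤ 1) (hη : 0 < η) {a : Fin n → ℝ} {s : ℝ}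
    (hs : 0 < s) (hFP : ∀ x ∈ Set.Icc a fun i => a i + s, ‖F x - P x‖ ≤ η)
    {ω : Set (Fin n → ℝ)} (hω : MeasurableSet ω)
    (hvol : ENNReal.ofReal θ * volume (halfOpenCube a s) ≤ volume (ω ∩ halfOpenCube a s)) :
    ∫ x in halfOpenCube a s, ‖F x‖ ^ 2 ≤ (remezConst n (θ / 2) ^ D) ^ 2 *
      (4 / θ * (∫ x in ω ∩ halfOpenCube a s, ‖F x‖ ^ 2) + 10 * η ^ 2 * s ^ n) := by
  set Q := halfOpenCube a s
  set I := ∫ x in ω ∩ Q, ‖F x‖ ^ 2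
  set Λ := remezConst n (θ / 2) ^ D
  have hF₂ : Continuous fun x => ‖F x‖ ^ 2 := by fun_prop
  have hintQ : IntegrableOn (fun x => ‖F x‖ ^ 2) Q :=
    (hF₂.continuousOn.integrableOn_compact isCompact_Icc).mono_set halfOpenCube_subset_Icc
  have hI : 0 ≤ I := integral_nonneg fun x => by positivity
  have hfin : volume (ω ∩ Q) ≠ ∞ :=
    measure_ne_top_of_subset Set.inter_subset_right volume_halfOpenCube_ne_top
  have hVω : θ * s ^ n ≤ volume.real (ω ∩ Q) := by
    simpa [Measure.real, Q, volume_halfOpenCube, hs.le, hθ.le] using ENNReal.toReal_mono hfin hvol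
  set τ := 2 * I / (θ * s ^ n) + η ^ 2
  have hτ₀ : 0 ≤ τ := by positivity
  have hτ : 2 * I < τ * volume.real (ω ∩ Q) :=
    calc 2 * I < 2 * I + η ^ 2 * (θ * s ^ n) := lt_add_of_pos_right _ (by positivity)
      _ = τ * (θ * s ^ n) := by simp only [τ]; field_simp
      _ ≤ τ * volume.real (ω ∩ Q) := by gcongr
  set E := ω ∩ Q ∩ {x | ‖F x‖ ^ 2 ≤ τ}
  have hEvol : ENNReal.ofReal (θ / 2) * volume (Set.Icc a fun i => a i + s) ≤ volume E := by
    have hcheb := hvol.trans (measure_le_two_mul_measure_inter_sublevel hfin hF₂.measurable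
      (fun x => sq_nonneg ‖F x‖) (hintQ.mono_set Set.inter_subset_right) hτ)
    rw [volume_Icc_eq_volume_halfOpenCube, ENNReal.ofReal_div_of_pos two_pos,
      ENNReal.ofReal_ofNat, ← ENNReal.mul_div_right_comm]
    exact ENNReal.div_le_of_le_mul' hcheb
  have hpointwise : ∀ x ∈ Q, ‖F x‖ ^ 2 ≤ Λ ^ 2 * (2 * τ + 8 * η ^ 2) := fun x hx =>
    hP.norm_sq_le_of_norm_sub_le (half_pos hθ) (by linarith) (fun i => lt_add_of_pos_right _ hs) hFP
      ((hω.inter measurableSet_halfOpenCube).inter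
        (measurableSet_le hF₂.measurable measurable_const))
      ((Set.inter_subset_left.trans Set.inter_subset_right).trans halfOpenCube_subset_Icc) hEvol
      hτ₀ (fun y hy => hy.2) (halfOpenCube_subset_Icc hx)
  calc ∫ x in Q, ‖F x‖ ^ 2 ≤ ∫ x in Q, Λ ^ 2 * (2 * τ + 8 * η ^ 2) :=
        setIntegral_mono_on hintQ (integrableOn_const volume_halfOpenCube_ne_top)
          measurableSet_halfOpenCube hpointwise
    _ = Λ ^ 2 * (4 / θ * I + 10 * η ^ 2 * s ^ n) := by
        rw [setIntegral_const, volume_real_halfOpenCube hs.le, smul_eq_mul, Fintype.card_fin]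
        simp only [τ]
        field_simp
        ring

end LocalEstimate

section Thick

variable {n : ℕ} {γ : ℝ} {ρ : En n → ℝ} {ω : Set (En n)}

lemma volume_closedBall_five_mul (y : En n) {r : ℝ} (hr : 0 < r) :
    volume (Metric.closedBall y (5 * r)) = 5 ^ n * volume (Metric.ball y r) := by
  rw [Measure.addHaar_closedBall volume y (by positivity), Measure.addHaar_ball_of_pos volume y hr,
    finrank_euclideanSpace_fin, mul_pow, ENNReal.ofReal_mul (by positivity), mul_assoc]
  norm_num

-- Vitali covering: disjoint balls `B(y, ρ y)`, `y ∈ Q'`, whose fivefold dilates cover `Q'`.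
lemma ThickWith.mul_volume_le (ht : ThickWith n γ ρ ω) (hρ : ∀ x, 0 < ρ x) (hω : MeasurableSet ω)
    {Q Q' : Set (En n)} {r : ℝ} (hr : ∀ y ∈ Q', ρ y ≤ r)
    (hball : ∀ y ∈ Q', Metric.ball y (ρ y) ⊆ Q) :
    ENNReal.ofReal γ * volume Q' ≤ 5 ^ n * volume (ω ∩ Q) := by
  obtain ⟨u, huQ', hdisj, hcover⟩ :=
    Vitali.exists_disjoint_subfamily_covering_enlargement_closedBall Q' (fun x => x)
      ρ r hr 5 (by norm_num)
  replace hdisj : u.PairwiseDisjoint fun y => Metric.ball y (ρ y) :=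
    hdisj.mono fun y => Metric.ball_subset_closedBall
  have hu : u.Countable := hdisj.countable_of_isOpen (fun y _ => Metric.isOpen_ball)
    fun y _ => Metric.nonempty_ball.2 (hρ y)
  have hQ' : volume Q' ≤ ∑' y : u, volume (Metric.closedBall (y : En n) (5 * ρ y)) := by
    refine (measure_mono fun x hx => ?_).trans
      (measure_biUnion_le volume hu fun y : En n => Metric.closedBall y (5 * ρ y))
    obtain ⟨y, hy, hxy⟩ := hcover x hx
    exact Set.mem_biUnion hy (hxy (Metric.mem_closedBall_self (hρ x).le))
  have hωQ : ∑' y : u, volume (ω ∩ Metric.ball (y : En n) (ρ y)) ≤ volume (ω ∩ Q) := by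
    rw [← measure_biUnion hu (f := fun y => ω ∩ Metric.ball y (ρ y))
      (hdisj.mono fun y => Set.inter_subset_right)
      fun y _ => hω.inter Metric.isOpen_ball.measurableSet]
    exact measure_mono (Set.iUnion₂_subset fun y hy =>
      Set.inter_subset_inter_right _ (hball y (huQ' hy)))
  calc ENNReal.ofReal γ * volume Q'
      ≤ ENNReal.ofReal γ * ∑' y : u, volume (Metric.closedBall (y : En n) (5 * ρ y)) := by gcongr
    _ = 5 ^ n * ∑' y : u, ENNReal.ofReal γ * volume (Metric.ball (y : En n) (ρ y)) := by
        simp_rw [volume_closedBall_five_mul _ (hρ _), ENNReal.tsum_mul_left]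
        ring
    _ ≤ 5 ^ n * ∑' y : u, volume (ω ∩ Metric.ball (y : En n) (ρ y)) := by
        gcongr with y
        exact ht y
    _ ≤ 5 ^ n * volume (ω ∩ Q) := by gcongr

lemma ThickWith.mul_volume_halfOpenCube_le (ht : ThickWith n γ ρ ω) (hρ : ∀ x, 0 < ρ x)
    (hω : MeasurableSet ω) {a : Fin n → ℝ} {s : ℝ}
    (hs : ∀ x : En n, x.ofLp ∈ halfOpenCube a s → ρ x ≤ s / 4) :
    ENNReal.ofReal (γ / 10 ^ n) * volume (halfOpenCube a s) ≤
      volume (WithLp.toLp 2 ⁻¹' ω ∩ halfOpenCube a s) := by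
  set Q' : Set (Fin n → ℝ) := halfOpenCube (fun i => a i + s / 4) (s / 2)
  have hQ'Q : ∀ y : En n, y.ofLp ∈ Q' → ρ y ≤ s / 4 := by
    intro y hy
    refine hs y (mem_halfOpenCube.2 fun i => ?_)
    have := mem_halfOpenCube.1 hy i
    constructor <;> linarith
  have hball : ∀ y : En n, y.ofLp ∈ Q' →
      Metric.ball y (ρ y) ⊆ WithLp.ofLp ⁻¹' halfOpenCube a s := by
    intro y hy x hx
    refine mem_halfOpenCube.2 fun i => ?_
    have hyi := mem_halfOpenCube.1 hy i
    have hxy : |x i - y i| < s / 4 := (PiLp.norm_apply_le (x - y) i).trans_lt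
      ((mem_ball_iff_norm.1 hx).trans_le (hQ'Q y hy))
    rw [abs_lt] at hxy
    constructor <;> linarith
  have hvitali := ht.mul_volume_le hρ hω hQ'Q hball
  have hQ' : volume (WithLp.ofLp ⁻¹' Q' : Set (En n)) = volume Q' :=
    (PiLp.volume_preserving_ofLp (Fin n)).measure_preimage
      measurableSet_halfOpenCube.nullMeasurableSet
  have hωQ : volume (WithLp.toLp 2 ⁻¹' ω ∩ halfOpenCube a s) =
      volume (ω ∩ WithLp.ofLp ⁻¹' halfOpenCube a s) :=
    (PiLp.volume_preserving_toLp (Fin n)).measure_preimage (hω.inter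
      ((PiLp.volume_preserving_ofLp (Fin n)).measurable
        measurableSet_halfOpenCube)).nullMeasurableSet
  have hfactor : 5 ^ n * (ENNReal.ofReal (γ / 10 ^ n) * 2 ^ n) = ENNReal.ofReal γ := by
    rw [mul_left_comm, ← mul_pow, ← ENNReal.ofReal_ofNat 5, ← ENNReal.ofReal_ofNat 2,
      ← ENNReal.ofReal_mul (by norm_num), ← ENNReal.ofReal_pow (by norm_num),
      ← ENNReal.ofReal_mul' (by positivity)]
    norm_num
  rw [hωQ, ← ENNReal.mul_le_mul_iff_right (a := 5 ^ n) (by positivity) (by finiteness),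
    volume_halfOpenCube_eq_two_pow_mul a (fun i => a i + s / 4), Fintype.card_fin, ← mul_assoc,
    ← mul_assoc, mul_assoc (5 ^ n), hfactor, ← hQ']
  exact hvitali

end Thick

/-! ### Finite Hermite expansions in several variables -/

lemma norm_sq_sum_mul_ofReal {κ : Type*} (A : Finset κ) (c : κ → ℂ) (h : κ → ℝ) :
    ‖∑ k ∈ A, c k * h k‖ ^ 2 =
      ∑ k ∈ A, ∑ l ∈ A, (c k * (starRingEnd ℂ) (c l)).re * (h k * h l) := by
  rw [← Complex.normSq_eq_norm_sq, ← Complex.ofReal_re (Complex.normSq _), ← Complex.mul_conj,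
    map_sum, Finset.sum_mul_sum, Complex.re_sum]
  refine Finset.sum_congr rfl fun k _ => ?_
  rw [Complex.re_sum]
  refine Finset.sum_congr rfl fun l _ => ?_
  rw [← Complex.re_mul_ofReal, map_mul, Complex.conj_ofReal, Complex.ofReal_mul,
    mul_mul_mul_comm]

lemma norm_prod_sub_prod_le {κ R : Type*} [NormedCommRing R] [NormOneClass R] (u : Finset κ)
    {a b : κ → R} {B δ : ℝ} (hB : 1 ≤ B) (ha : ∀ i ∈ u, ‖a i‖ ≤ B) (hb : ∀ i ∈ u, ‖b i‖ ≤ B)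
    (hab : ∀ i ∈ u, ‖a i - b i‖ ≤ δ) :
    ‖∏ i ∈ u, a i - ∏ i ∈ u, b i‖ ≤ u.card * B ^ u.card * δ := by
  classical
  induction u using Finset.induction_on with
  | empty => simp
  | insert j u hj ih =>
    simp only [Finset.forall_mem_insert] at ha hb hab
    have hδ : 0 ≤ δ := (norm_nonneg _).trans hab.1
    have hprod : ‖∏ i ∈ u, b i‖ ≤ B ^ u.card :=
      calc ‖∏ i ∈ u, b i‖ ≤ ∏ i ∈ u, ‖b i‖ := Finset.norm_prod_le _ _
        _ ≤ ∏ _i ∈ u, B := Finset.prod_le_prod (fun _ _ => norm_nonneg _) hb.2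
        _ = B ^ u.card := Finset.prod_const B
    rw [Finset.prod_insert hj, Finset.prod_insert hj, Finset.card_insert_of_notMem hj]
    calc ‖a j * ∏ i ∈ u, a i - b j * ∏ i ∈ u, b i‖
        = ‖a j * (∏ i ∈ u, a i - ∏ i ∈ u, b i) + (a j - b j) * ∏ i ∈ u, b i‖ := by
          congr 1; ring
      _ ≤ B * (u.card * B ^ u.card * δ) + δ * B ^ u.card :=
          (norm_add_le _ _).trans (add_le_add
            (norm_mul_le_of_le ha.1 (ih ha.2 hb.2 hab.2)) (norm_mul_le_of_le hab.1 hprod))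
      _ ≤ B * (u.card * B ^ u.card * δ) + δ * B ^ (u.card + 1) := by
          gcongr
          exact Nat.le_succ _
      _ = ((u.card + 1 : ℕ) : ℝ) * B ^ (u.card + 1) * δ := by push_cast; ring

lemma isSeparatelyPolynomial_sum_mul_prod_eval {ι κ : Type*} [Fintype ι] [DecidableEq ι]
    (A : Finset κ) (c : κ → ℂ) {q : κ → ι → Polynomial ℝ} {D : ℕ}
    (hq : ∀ k i, (q k i).natDegree ≤ D) :
    IsSeparatelyPolynomial D fun x : ι → ℝ =>
      ∑ k ∈ A, c k * ((∏ i, (q k i).eval (x i) : ℝ) : ℂ) := by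
  intro x i
  refine ⟨∑ k ∈ A, Polynomial.C (c k * ((∏ j ∈ Finset.univ.erase i, (q k j).eval (x j) : ℝ) : ℂ)) *
    (q k i).map (algebraMap ℝ ℂ), ?_, fun t => ?_⟩
  · exact Polynomial.natDegree_sum_le_of_forall_le _ _ fun k _ =>
      (Polynomial.natDegree_C_mul_le _ _).trans (Polynomial.natDegree_map_le.trans (hq k i))
  · rw [Polynomial.eval_finsetSum]
    refine Finset.sum_congr rfl fun k _ => ?_
    have hother : ∏ j ∈ Finset.univ.erase i, (q k j).eval (Function.update x i t j) =
        ∏ j ∈ Finset.univ.erase i, (q k j).eval (x j) :=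
      Finset.prod_congr rfl fun j hj => by rw [Function.update_of_ne (Finset.ne_of_mem_erase hj)]
    have heval : ((q k i).map (algebraMap ℝ ℂ)).eval (RCLike.ofReal t) = ((q k i).eval t : ℝ) := by
      rw [Polynomial.eval_map]
      exact Polynomial.eval₂_at_apply (algebraMap ℝ ℂ) t
    rw [← Finset.mul_prod_erase _ _ (Finset.mem_univ i), hother, Function.update_self,
      Polynomial.eval_mul, Polynomial.eval_C, heval]
    push_cast
    ring

lemma exists_le_abs_of_notMem_halfOpenCube {ι : Type*} {L : ℝ} {x : ι → ℝ}
    (hx : x ∉ halfOpenCube (fun _ => -L) (2 * L)) : ∃ i, L ≤ |x i| := by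
  contrapose! hx
  refine mem_halfOpenCube.2 fun i => ?_
  have := abs_lt.1 (hx i)
  constructor <;> linarith

section HermiteSum

variable {ι : Type*} [Fintype ι]

/-- The tensorised Hermite function `Φ_α`, real valued and on the plain product `ι → ℝ`. -/
def hermiteProd (α : ι → ℕ) (x : ι → ℝ) : ℝ :=
  ∏ i, hermite1 (α i) (x i)

lemma continuous_hermiteProd (α : ι → ℕ) : Continuous (hermiteProd α) :=
  continuous_finsetProd _ fun i _ => (continuous_hermite1 (α i)).comp (continuous_apply i)

lemma integrable_hermiteProd_mul (α β : ι → ℕ) :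
    Integrable fun x => hermiteProd α x * hermiteProd β x := by
  simp_rw [hermiteProd, ← Finset.prod_mul_distrib]
  exact Integrable.fintype_prod (f := fun i t => hermite1 (α i) t * hermite1 (β i) t)
    fun i => integrable_hermite1_mul _ _

lemma integral_hermiteProd_mul (α β : ι → ℕ) :
    ∫ x, hermiteProd α x * hermiteProd β x = if α = β then 1 else 0 := by
  simp_rw [hermiteProd, ← Finset.prod_mul_distrib]
  rw [integral_fintype_prod_volume_eq_prod fun i t => hermite1 (α i) t * hermite1 (β i) t]
  simp_rw [integral_hermite1_mul, funext_iff, Fintype.prod_ite_zero, Finset.prod_const_one]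

lemma integrable_sq_monomial_mul_hermiteProd (α β : ι → ℕ) :
    Integrable fun x : ι → ℝ => ((∏ i, x i ^ β i) * hermiteProd α x) ^ 2 := by
  simp_rw [hermiteProd, ← Finset.prod_mul_distrib, ← Finset.prod_pow]
  exact Integrable.fintype_prod (f := fun i (t : ℝ) => (t ^ β i * hermite1 (α i) t) ^ 2)
    fun i => integrable_sq_pow_mul_hermite1 _ _

lemma integral_sq_monomial_mul_hermiteProd_le (α β : ι → ℕ) :
    ∫ x : ι → ℝ, ((∏ i, x i ^ β i) * hermiteProd α x) ^ 2 ≤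
      ∏ i, (2 * ((α i : ℝ) + β i)) ^ β i := by
  simp_rw [hermiteProd, ← Finset.prod_mul_distrib, ← Finset.prod_pow]
  rw [integral_fintype_prod_volume_eq_prod fun i (t : ℝ) => (t ^ β i * hermite1 (α i) t) ^ 2]
  exact Finset.prod_le_prod (fun i _ => integral_nonneg fun t => sq_nonneg _)
    fun i _ => integral_sq_pow_mul_hermite1_le _ _

lemma integrable_sq_pow_mul_hermiteProd (α : ι → ℕ) (i : ι) (p : ℕ) :
    Integrable fun x : ι → ℝ => (x i ^ p * hermiteProd α x) ^ 2 := by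
  classical
  simpa [Pi.single_apply] using integrable_sq_monomial_mul_hermiteProd α (Pi.single i p)

lemma integral_sq_pow_mul_hermiteProd_le (α : ι → ℕ) (i : ι) (p : ℕ) :
    ∫ x : ι → ℝ, (x i ^ p * hermiteProd α x) ^ 2 ≤ (2 * ((α i : ℝ) + p)) ^ p := by
  classical
  simpa [Pi.single_apply] using integral_sq_monomial_mul_hermiteProd_le α (Pi.single i p)

lemma setIntegral_compl_sq_hermiteProd_le {α : ι → ℕ} {N : ℕ} (hα : ∀ i, α i ≤ N) {L : ℝ}
    (hL : 0 < L) (p : ℕ) :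
    ∫ x in (halfOpenCube (fun _ : ι => -L) (2 * L))ᶜ, hermiteProd α x ^ 2 ≤
      Fintype.card ι * ((2 * ((N : ℝ) + p)) ^ p / (L ^ p) ^ 2) := by
  set g : (ι → ℝ) → ℝ := fun x => ∑ i, (x i ^ p * hermiteProd α x) ^ 2 / (L ^ p) ^ 2
  have hterm (i : ι) : Integrable fun x : ι → ℝ => (x i ^ p * hermiteProd α x) ^ 2 / (L ^ p) ^ 2 :=
    (integrable_sq_pow_mul_hermiteProd α i p).div_const _
  have hg : Integrable g := integrable_finsetSum _ fun i _ => hterm i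
  have hsq : Integrable fun x => hermiteProd α x ^ 2 := by
    simpa [sq] using integrable_hermiteProd_mul α α
  have hle : ∀ x ∈ (halfOpenCube (fun _ : ι => -L) (2 * L))ᶜ, hermiteProd α x ^ 2 ≤ g x := by
    intro x hx
    obtain ⟨i, hi⟩ := exists_le_abs_of_notMem_halfOpenCube hx
    have hpow : (L ^ p) ^ 2 ≤ (x i ^ p) ^ 2 := by rw [← sq_abs (x i ^ p), abs_pow]; gcongr
    calc hermiteProd α x ^ 2 ≤ (x i ^ p * hermiteProd α x) ^ 2 / (L ^ p) ^ 2 := by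
          rw [le_div_iff₀ (by positivity), mul_pow, mul_comm]
          gcongr
      _ ≤ g x := Finset.single_le_sum
          (f := fun i => (x i ^ p * hermiteProd α x) ^ 2 / (L ^ p) ^ 2)
          (fun i _ => by positivity) (Finset.mem_univ i)
  calc ∫ x in (halfOpenCube (fun _ : ι => -L) (2 * L))ᶜ, hermiteProd α x ^ 2
      ≤ ∫ x in (halfOpenCube (fun _ : ι => -L) (2 * L))ᶜ, g x :=
        setIntegral_mono_on hsq.integrableOn hg.integrableOn measurableSet_halfOpenCube.compl hle
    _ ≤ ∫ x, g x := setIntegral_le_integral hg (.of_forall fun x => by positivity)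
    _ = ∑ i, (∫ x : ι → ℝ, (x i ^ p * hermiteProd α x) ^ 2) / (L ^ p) ^ 2 := by
        rw [integral_finsetSum _ fun i _ => hterm i]
        simp_rw [integral_div]
    _ ≤ ∑ _i : ι, (2 * ((N : ℝ) + p)) ^ p / (L ^ p) ^ 2 := by
        gcongr with i
        refine (integral_sq_pow_mul_hermiteProd_le α i p).trans ?_
        gcongr
        exact hα i
    _ = Fintype.card ι * ((2 * ((N : ℝ) + p)) ^ p / (L ^ p) ^ 2) := by simp

/-- The finite Hermite expansion `∑ α ∈ A, c α Φ_α`. -/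
def hermiteSum (A : Finset (ι → ℕ)) (c : (ι → ℕ) → ℂ) (x : ι → ℝ) : ℂ :=
  ∑ α ∈ A, c α * hermiteProd α x

variable (A : Finset (ι → ℕ)) (c : (ι → ℕ) → ℂ)

lemma continuous_hermiteSum : Continuous (hermiteSum A c) :=
  continuous_finsetSum _ fun α _ =>
    continuous_const.mul (Complex.continuous_ofReal.comp (continuous_hermiteProd α))

lemma integrable_norm_sq_hermiteSum : Integrable fun x => ‖hermiteSum A c x‖ ^ 2 := by
  simp_rw [hermiteSum, norm_sq_sum_mul_ofReal]
  exact integrable_finsetSum _ fun α _ => integrable_finsetSum _ fun β _ =>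
    (integrable_hermiteProd_mul α β).const_mul _

lemma integral_norm_sq_hermiteSum : ∫ x, ‖hermiteSum A c x‖ ^ 2 = ∑ α ∈ A, ‖c α‖ ^ 2 := by
  classical
  simp_rw [hermiteSum, norm_sq_sum_mul_ofReal]
  rw [integral_finsetSum _ fun α _ => integrable_finsetSum _ fun β _ =>
    (integrable_hermiteProd_mul α β).const_mul _]
  refine Finset.sum_congr rfl fun α hα => ?_
  rw [integral_finsetSum _ fun β _ => (integrable_hermiteProd_mul α β).const_mul _]
  simp_rw [integral_const_mul, integral_hermiteProd_mul, mul_ite, mul_one, mul_zero]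
  rw [Finset.sum_ite_eq, if_pos hα, Complex.mul_conj, Complex.ofReal_re,
    Complex.normSq_eq_norm_sq]

lemma norm_sq_hermiteSum_le (x : ι → ℝ) :
    ‖hermiteSum A c x‖ ^ 2 ≤ (∑ α ∈ A, ‖c α‖ ^ 2) * ∑ α ∈ A, hermiteProd α x ^ 2 := by
  have htriangle : ‖hermiteSum A c x‖ ≤ ∑ α ∈ A, ‖c α‖ * |hermiteProd α x| := by
    simpa [hermiteSum] using norm_sum_le A fun α => c α * (hermiteProd α x : ℂ)
  calc ‖hermiteSum A c x‖ ^ 2 ≤ (∑ α ∈ A, ‖c α‖ * |hermiteProd α x|) ^ 2 := by gcongr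
    _ ≤ (∑ α ∈ A, ‖c α‖ ^ 2) * ∑ α ∈ A, |hermiteProd α x| ^ 2 :=
        Finset.sum_mul_sq_le_sq_mul_sq _ _ _
    _ = (∑ α ∈ A, ‖c α‖ ^ 2) * ∑ α ∈ A, hermiteProd α x ^ 2 := by simp_rw [sq_abs]

variable {A} {N : ℕ}

lemma setIntegral_compl_norm_sq_hermiteSum_le (hA : ∀ α ∈ A, ∀ i, α i ≤ N) {L : ℝ} (hL : 0 < L)
    (p : ℕ) :
    ∫ x in (halfOpenCube (fun _ : ι => -L) (2 * L))ᶜ, ‖hermiteSum A c x‖ ^ 2 ≤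
      (∑ α ∈ A, ‖c α‖ ^ 2) *
        (A.card * (Fintype.card ι * ((2 * ((N : ℝ) + p)) ^ p / (L ^ p) ^ 2))) := by
  have hsq (α : ι → ℕ) : Integrable fun x => hermiteProd α x ^ 2 := by
    simpa [sq] using integrable_hermiteProd_mul α α
  calc ∫ x in (halfOpenCube (fun _ : ι => -L) (2 * L))ᶜ, ‖hermiteSum A c x‖ ^ 2
      ≤ ∫ x in (halfOpenCube (fun _ : ι => -L) (2 * L))ᶜ,
          (∑ α ∈ A, ‖c α‖ ^ 2) * ∑ α ∈ A, hermiteProd α x ^ 2 :=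
        setIntegral_mono (integrable_norm_sq_hermiteSum A c).integrableOn
          ((integrable_finsetSum _ fun α _ => hsq α).const_mul _).integrableOn
          (norm_sq_hermiteSum_le A c)
    _ = (∑ α ∈ A, ‖c α‖ ^ 2) *
          ∑ α ∈ A, ∫ x in (halfOpenCube (fun _ : ι => -L) (2 * L))ᶜ, hermiteProd α x ^ 2 := by
        rw [integral_const_mul, integral_finsetSum _ fun α _ => (hsq α).integrableOn]
    _ ≤ _ := by
        rw [← nsmul_eq_mul A.card]
        gcongr
        exact Finset.sum_le_card_nsmul _ _ _ fun α hα =>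
          setIntegral_compl_sq_hermiteProd_le (hA α hα) hL p

lemma exists_isSeparatelyPolynomial_norm_hermiteSum_sub_le [DecidableEq ι]
    (hA : ∀ α ∈ A, ∀ i, α i ≤ N) {D : ℕ} (hD : 1 ≤ D) (a : ι → ℝ) {s : ℝ} (hs : 0 < s) {δ : ℝ}
    (hδ : √(2 * ((N : ℝ) + D)) ^ D * ((N : ℝ) + D + 2) * s ^ D / (D - 1).factorial ≤ δ)
    (hδ₁ : δ ≤ 1) :
    ∃ P, IsSeparatelyPolynomial D P ∧ ∀ x ∈ Set.Icc a fun i => a i + s,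
      ‖hermiteSum A c x - P x‖ ≤ A.card * (√(∑ α ∈ A, ‖c α‖ ^ 2) *
        (Fintype.card ι * ((N : ℝ) + 3) ^ Fintype.card ι * δ)) := by
  choose q hqD hq using fun (k : ℕ) (i : ι) =>
    exists_polynomial_abs_hermite1_sub_eval_le k hD (a i) hs
  refine ⟨_, isSeparatelyPolynomial_sum_mul_prod_eval A c (q := fun α i => q (α i) i)
    fun α i => hqD _ _, fun x hx => ?_⟩
  have hprod : ∀ α ∈ A, ‖hermiteProd α x - ∏ i, (q (α i) i).eval (x i)‖ ≤
      Fintype.card ι * ((N : ℝ) + 3) ^ Fintype.card ι * δ := by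
    intro α hα
    have hαN (i : ι) : (α i : ℝ) ≤ N := by exact_mod_cast hA α hα i
    have hsub (i : ι) : ‖hermite1 (α i) (x i) - (q (α i) i).eval (x i)‖ ≤ δ := by
      refine ((hq (α i) i _ ⟨hx.1 i, hx.2 i⟩).trans ?_).trans hδ
      have := hαN i
      gcongr
    have hhermite (i : ι) : ‖hermite1 (α i) (x i)‖ ≤ (N : ℝ) + 2 :=
      (abs_hermite1_le _ _).trans (by linarith [hαN i])
    exact norm_prod_sub_prod_le Finset.univ (by linarith [N.cast_nonneg (α := ℝ)])
      (fun i _ => (hhermite i).trans (by linarith))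
      (fun i _ => (norm_le_norm_add_norm_sub (hermite1 (α i) (x i)) _).trans
        (by linarith [hhermite i, hsub i]))
      fun i _ => hsub i
  have hcoeff : ∀ α ∈ A, ‖c α‖ ≤ √(∑ α ∈ A, ‖c α‖ ^ 2) := fun α hα =>
    Real.le_sqrt_of_sq_le (Finset.single_le_sum (f := fun α => ‖c α‖ ^ 2)
      (fun _ _ => by positivity) hα)
  rw [hermiteSum, ← Finset.sum_sub_distrib, ← nsmul_eq_mul]
  refine (norm_sum_le _ _).trans (Finset.sum_le_card_nsmul _ _ _ fun α hα => ?_)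
  rw [← mul_sub, norm_mul, ← Complex.ofReal_sub, Complex.norm_real]
  exact mul_le_mul (hcoeff α hα) (hprod α hα) (norm_nonneg _) (Real.sqrt_nonneg _)

end HermiteSum

lemma exists_hermiteSum_of_mem_hermiteSpan {n N : ℕ} {f : En n → ℂ} (hf : f ∈ hermiteSpan n N) :
    ∃ c, ∀ x, f (WithLp.toLp 2 x) = hermiteSum (Finset.Iic fun _ : Fin n => N) c x := by
  have hspan : hermiteSpan n N ≤
      Submodule.span ℂ (hermiteFun n '' (Finset.Iic fun _ : Fin n => N : Finset (Fin n → ℕ))) := by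
    refine Submodule.span_mono ?_
    rintro _ ⟨α, hα, rfl⟩
    exact ⟨α, Finset.mem_coe.2 (Finset.mem_Iic.2 fun i =>
      (Finset.single_le_sum (fun _ _ => Nat.zero_le _) (Finset.mem_univ i)).trans hα), rfl⟩
  obtain ⟨c, rfl⟩ := Submodule.mem_span_image_finset_iff_exists_fun' ℂ |>.1 (hspan hf)
  exact ⟨c, fun x => by simp [hermiteSum, hermiteFun, hermiteProd]⟩

/-! ### Choice of the parameters -/

lemma add_one_le_four_pow {N M D : ℕ} (hNM : N ≤ M ^ 2) (hMD : M ≤ D) : N + 1 ≤ 4 ^ D := by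
  have hM : M + 1 ≤ 2 ^ M := Nat.lt_two_pow_self
  calc N + 1 ≤ (M + 1) ^ 2 := by nlinarith
    _ ≤ (2 ^ M) ^ 2 := Nat.pow_le_pow_left hM 2
    _ = 4 ^ M := by rw [pow_right_comm]; norm_num
    _ ≤ 4 ^ D := Nat.pow_le_pow_right (by norm_num) hMD

lemma mul_add_add_two_le_sixteen_pow {N D : ℕ} (hND : N + 1 ≤ 4 ^ D) :
    D * (N + D + 2) ≤ 16 ^ D := by
  rcases Nat.eq_zero_or_pos D with rfl | hD
  · simp
  have hD₁ : D + 1 ≤ 2 ^ D := Nat.lt_two_pow_self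
  have hD₂ : 2 ^ D ≤ 4 ^ D := Nat.pow_le_pow_left (by norm_num) D
  calc D * (N + D + 2) ≤ 2 ^ D * (2 * 4 ^ D) := Nat.mul_le_mul (by omega) (by omega)
    _ ≤ 2 ^ D * (2 ^ D * 4 ^ D) := by gcongr; exact Nat.le_self_pow hD.ne' 2
    _ = 16 ^ D := by rw [← mul_pow, ← mul_pow]; norm_num

lemma pow_div_factorial_pred_le {y : ℝ} (hy : 0 ≤ y) {D : ℕ} (hD : D ≠ 0) :
    (y * D) ^ D / (D - 1).factorial ≤ D * (y * Real.exp 1) ^ D := by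
  have hfac : (D.factorial : ℝ) = D * (D - 1).factorial := by
    exact_mod_cast (Nat.mul_factorial_pred hD).symm
  have hexp : (D : ℝ) ^ D / D.factorial ≤ Real.exp 1 ^ D := by
    rw [← Real.exp_nat_mul, mul_one]
    exact Real.pow_div_factorial_le_exp _ (by positivity) _
  calc (y * D) ^ D / (D - 1).factorial
      = D * y ^ D * ((D : ℝ) ^ D / D.factorial) := by
        rw [hfac, mul_pow]; field_simp
    _ ≤ D * y ^ D * Real.exp 1 ^ D := by gcongr
    _ = D * (y * Real.exp 1) ^ D := by rw [mul_pow]; ring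

lemma sqrt_mul_le_div_sqrt_mul {K N M : ℕ} (hK : 1 ≤ K) (hMN : M ≤ N) {A s : ℝ} (hs : 0 ≤ s)
    (hsN : s * √N ≤ A * M) :
    √(2 * ((N : ℝ) + (K * M : ℕ))) * s ≤ 2 * A / √K * (K * M : ℕ) := by
  have hK' : (1 : ℝ) ≤ K := by exact_mod_cast hK
  have hMN' : (M : ℝ) ≤ N := by exact_mod_cast hMN
  have hsqrt : √(2 * ((N : ℝ) + (K * M : ℕ))) ≤ 2 * √K * √N := by
    refine Real.sqrt_le_iff.2 ⟨by positivity, ?_⟩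
    rw [mul_pow, mul_pow, Real.sq_sqrt (by positivity), Real.sq_sqrt (by positivity)]
    push_cast
    nlinarith
  calc √(2 * ((N : ℝ) + (K * M : ℕ))) * s ≤ 2 * √K * √N * s := by gcongr
    _ = 2 * √K * (s * √N) := by ring
    _ ≤ 2 * √K * (A * M) := by gcongr
    _ = 2 * A / √K * (K * M : ℕ) := by
      have hKsq : √(K : ℝ) * √K = K := Real.mul_self_sqrt K.cast_nonneg
      push_cast
      field_simp
      linear_combination A * M * hKsq

lemma taylor_remainder_le {K N M : ℕ} (hK : 1 ≤ K) (hM : 1 ≤ M) (hMN : M ≤ N) (hNM : N ≤ M ^ 2)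
    {A s : ℝ} (hA : 0 ≤ A) (hs : 0 ≤ s) (hsN : s * √N ≤ A * M) :
    √(2 * ((N : ℝ) + (K * M : ℕ))) ^ (K * M) * ((N : ℝ) + (K * M : ℕ) + 2) * s ^ (K * M) /
      (K * M - 1).factorial ≤ (32 * Real.exp 1 * A / √K) ^ (K * M) := by
  have hscale := sqrt_mul_le_div_sqrt_mul hK hMN hs hsN
  have hN := add_one_le_four_pow hNM (Nat.le_mul_of_pos_left M hK)
  have hD : K * M ≠ 0 := by positivity
  generalize K * M = D at *
  have hpoly : (D : ℝ) * (N + D + 2) ≤ 16 ^ D := by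
    exact_mod_cast mul_add_add_two_le_sixteen_pow hN
  calc √(2 * ((N : ℝ) + D)) ^ D * ((N : ℝ) + D + 2) * s ^ D / (D - 1).factorial
      = ((N : ℝ) + D + 2) * ((√(2 * ((N : ℝ) + D)) * s) ^ D / (D - 1).factorial) := by
        rw [mul_pow]; ring
    _ ≤ ((N : ℝ) + D + 2) * ((2 * A / √K * D) ^ D / (D - 1).factorial) := by gcongr
    _ ≤ ((N : ℝ) + D + 2) * (D * (2 * A / √K * Real.exp 1) ^ D) := by
        gcongr
        exact pow_div_factorial_pred_le (by positivity) hD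
    _ = D * (N + D + 2) * (2 * A / √K * Real.exp 1) ^ D := by ring
    _ ≤ 16 ^ D * (2 * A / √K * Real.exp 1) ^ D := by gcongr
    _ = (32 * Real.exp 1 * A / √K) ^ D := by rw [← mul_pow]; congr 1; ring

lemma exists_nat_mul_div_sqrt_sq_le (G A : ℝ) : ∃ K : ℕ, 1 ≤ K ∧ G * (A / √K) ^ 2 ≤ 1 / 4 := by
  obtain ⟨K, hK⟩ := exists_nat_ge (max 1 (4 * G * A ^ 2))
  have hK₁ : (1 : ℝ) ≤ K := (le_max_left _ _).trans hK
  refine ⟨K, by exact_mod_cast hK₁, ?_⟩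
  rw [div_pow, Real.sq_sqrt (by positivity), ← mul_div_assoc, div_le_iff₀ (by positivity)]
  linarith [(le_max_right 1 (4 * G * A ^ 2)).trans hK]

lemma local_error_le {n N D : ℕ} {Λ L₁ x : ℝ} (hN₁ : 1 ≤ N) (hD : D ≠ 0) (hND : N + 1 ≤ 4 ^ D)
    (hL₁ : 1 ≤ L₁) (hx : 0 ≤ x)
    (hG : 10 * Λ ^ 2 * (4 ^ n * ((n + 1) * 12 ^ n)) ^ 2 * (8 * L₁) ^ n * x ^ 2 ≤ 1 / 4) :
    10 * (Λ ^ D) ^ 2 * (((N : ℝ) + 1) ^ n * (((n : ℝ) + 1) * ((N : ℝ) + 3) ^ n * x ^ D)) ^ 2 *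
      (2 * (L₁ * √N)) ^ n ≤ 1 / 4 := by
  have hN₁' : (1 : ℝ) ≤ N := by exact_mod_cast hN₁
  have hN : (N : ℝ) + 1 ≤ 4 ^ D := by exact_mod_cast hND
  have hN3 : (N : ℝ) + 3 ≤ 12 ^ D := by
    have : (3 : ℝ) ≤ 3 ^ D := le_self_pow₀ (by norm_num) hD
    calc (N : ℝ) + 3 ≤ 3 * (N + 1) := by linarith
      _ ≤ 3 ^ D * 4 ^ D := by gcongr
      _ = 12 ^ D := by rw [← mul_pow]; norm_num
  have hn : (n : ℝ) + 1 ≤ (n + 1) ^ D := le_self_pow₀ (by simp) hD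
  have hL : 2 * (L₁ * √N) ≤ (8 * L₁) ^ D := by
    have hsqrt : √(N : ℝ) ≤ N := Real.sqrt_le_self_iff.2 (.inr hN₁')
    calc 2 * (L₁ * √N) = 2 * L₁ * √N := by ring
      _ ≤ (2 * L₁) ^ D * 4 ^ D := by
        gcongr
        · exact le_self_pow₀ (by linarith) hD
        · linarith
      _ = (8 * L₁) ^ D := by rw [← mul_pow]; ring
  have h10 : (10 : ℝ) ≤ 10 ^ D := le_self_pow₀ (by norm_num) hD
  calc _ ≤ 10 ^ D * (Λ ^ D) ^ 2 * ((4 ^ D) ^ n * ((n + 1) ^ D * (12 ^ D) ^ n * x ^ D)) ^ 2 *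
        ((8 * L₁) ^ D) ^ n := by gcongr
    _ = (10 * Λ ^ 2 * (4 ^ n * ((n + 1) * 12 ^ n)) ^ 2 * (8 * L₁) ^ n * x ^ 2) ^ D := by
        generalize (n : ℝ) + 1 = p
        ring
    _ ≤ (1 / 4) ^ D := by gcongr
    _ ≤ 1 / 4 := pow_le_of_le_one (by norm_num) (by norm_num) hD

/-- The polynomial degree is `K * M`: the Taylor remainder is at most `(c / √K) ^ (K * M)`, which
for large `K` beats all the other factors, each of them exponential in `K * M` with a base
independent of `K`. -/
lemma exists_degree_factor (n : ℕ) {Λ L₁ : ℝ} (hΛ : 1 ≤ Λ) (hL₁ : 1 ≤ L₁) :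
    ∃ K : ℕ, 1 ≤ K ∧ ∀ N M : ℕ, 1 ≤ M → M ≤ N → N ≤ M ^ 2 →
      ∀ s : ℝ, 0 ≤ s → s * √N ≤ 4 * L₁ * M → ∃ δ : ℝ, 0 < δ ∧ δ ≤ 1 ∧
        √(2 * ((N : ℝ) + (K * M : ℕ))) ^ (K * M) * ((N : ℝ) + (K * M : ℕ) + 2) * s ^ (K * M) /
          (K * M - 1).factorial ≤ δ ∧
        10 * (Λ ^ (K * M)) ^ 2 * (((N : ℝ) + 1) ^ n * (((n : ℝ) + 1) * ((N : ℝ) + 3) ^ n * δ)) ^ 2 *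
          (2 * (L₁ * √N)) ^ n ≤ 1 / 4 := by
  set G : ℝ := 10 * Λ ^ 2 * (4 ^ n * ((n + 1) * 12 ^ n)) ^ 2 * (8 * L₁) ^ n with hG
  have hG₁ : 1 ≤ G := by
    have h4 : (1 : ℝ) ≤ 4 ^ n := one_le_pow₀ (by norm_num)
    have h12 : (1 : ℝ) ≤ 12 ^ n := one_le_pow₀ (by norm_num)
    have hL : (1 : ℝ) ≤ (8 * L₁) ^ n := one_le_pow₀ (by linarith)
    calc (1 : ℝ) ≤ 10 * 1 ^ 2 * (1 * ((0 + 1) * 1)) ^ 2 * 1 := by norm_num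
      _ ≤ G := by rw [hG]; gcongr; positivity
  obtain ⟨K, hK, hGK⟩ := exists_nat_mul_div_sqrt_sq_le G (32 * Real.exp 1 * (4 * L₁))
  have hx₀ : 0 < 32 * Real.exp 1 * (4 * L₁) / √K := by positivity
  have hx₁ : 32 * Real.exp 1 * (4 * L₁) / √K ≤ 1 := by
    rw [← sq_le_one_iff₀ hx₀.le]
    nlinarith [sq_nonneg (32 * Real.exp 1 * (4 * L₁) / √K)]
  refine ⟨K, hK, fun N M hM hMN hNM s hs hsN => ⟨_, pow_pos hx₀ (K * M),
    pow_le_one₀ hx₀.le hx₁, taylor_remainder_le hK hM hMN hNM (by positivity) hs hsN, ?_⟩⟩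
  exact local_error_le (hM.trans hMN) (by positivity)
    (add_one_le_four_pow hNM (Nat.le_mul_of_pos_left M hK)) hL₁ hx₀.le hGK

lemma tail_factor_le_half {n N : ℕ} {L₁ : ℝ} (hN : 1 ≤ N) (hL₁ : 8 * 4 ^ n ≤ L₁ ^ 2) :
    ((N : ℝ) + 1) ^ n * (n * ((2 * ((N : ℝ) + N)) ^ N / ((L₁ * √N) ^ N) ^ 2)) ≤ 1 / 2 := by
  have hL₁' : 0 < L₁ ^ 2 := lt_of_lt_of_le (by positivity) hL₁
  have hratio : (2 * ((N : ℝ) + N)) ^ N / ((L₁ * √N) ^ N) ^ 2 = (4 / L₁ ^ 2) ^ N := by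
    rw [pow_right_comm, mul_pow L₁, Real.sq_sqrt N.cast_nonneg, ← div_pow]
    congr 1
    field_simp
    norm_num
  have hN' : ((N : ℝ) + 1) ^ n ≤ (2 ^ n) ^ N := by
    rw [pow_right_comm]
    gcongr
    exact_mod_cast (Nat.lt_two_pow_self : N < 2 ^ N)
  have hn : (n : ℝ) ≤ (2 ^ n) ^ N := by
    have : (n : ℝ) ≤ 2 ^ n := by exact_mod_cast (Nat.lt_two_pow_self : n < 2 ^ n).le
    exact this.trans (le_self_pow₀ (one_le_pow₀ (by norm_num)) (by omega))
  calc _ ≤ ((2 : ℝ) ^ n) ^ N * ((2 ^ n) ^ N * (4 / L₁ ^ 2) ^ N) := by rw [hratio]; gcongr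
    _ = (4 ^ n * 4 / L₁ ^ 2) ^ N := by
      rw [← mul_pow, ← mul_pow, show (4 : ℝ) ^ n = 2 ^ n * 2 ^ n by rw [← mul_pow]; norm_num]
      ring
    _ ≤ (1 / 2) ^ N := by
      refine pow_le_pow_left₀ (by positivity) ?_ _
      rw [div_le_div_iff₀ hL₁' (by norm_num)]
      linarith
    _ ≤ 1 / 2 := pow_le_of_le_one (by norm_num) (by norm_num) (by omega)

lemma exists_box_factor (n : ℕ) {ε R : ℝ} (hε : 0 < ε) (hε₁ : ε ≤ 1) (hR : 0 ≤ R) :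
    ∃ L₁ : ℝ, 1 ≤ L₁ ∧ 8 * 4 ^ n ≤ L₁ ^ 2 ∧ R * (1 + n * L₁ ^ 2) ^ ((1 - ε) / 2) ≤ L₁ / 2 := by
  obtain ⟨L₁, hL₁⟩ : ∃ L₁ : ℝ, L₁ = max (8 * 4 ^ n) ((2 * R * (n + 1)) ^ ε⁻¹) := ⟨_, rfl⟩
  have h4 : (1 : ℝ) ≤ 4 ^ n := one_le_pow₀ (by norm_num)
  have h8 : 8 * 4 ^ n ≤ L₁ := hL₁ ▸ le_max_left _ _
  have h1 : 1 ≤ L₁ := by linarith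
  have hRL : 2 * R * (n + 1) ≤ L₁ ^ ε :=
    (Real.rpow_inv_le_iff_of_pos (by positivity) (by positivity) hε).1 (hL₁ ▸ le_max_right _ _)
  have hbracket : (1 + n * L₁ ^ 2) ^ ((1 - ε) / 2) ≤ ((n : ℝ) + 1) * L₁ ^ (1 - ε) := by
    calc (1 + n * L₁ ^ 2) ^ ((1 - ε) / 2) ≤ (((n : ℝ) + 1) * L₁ ^ 2) ^ ((1 - ε) / 2) := by
          refine Real.rpow_le_rpow (by positivity) ?_ (by linarith)
          nlinarith
      _ = ((n : ℝ) + 1) ^ ((1 - ε) / 2) * L₁ ^ (1 - ε) := by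
          rw [Real.mul_rpow (by positivity) (by positivity),
            ← Real.rpow_natCast_mul (by positivity)]
          congr 2
          push_cast
          ring
      _ ≤ ((n : ℝ) + 1) * L₁ ^ (1 - ε) := by
          gcongr
          exact Real.rpow_le_self_of_one_le (by simp) (by linarith)
  refine ⟨L₁, h1, by nlinarith, ?_⟩
  calc R * (1 + n * L₁ ^ 2) ^ ((1 - ε) / 2) ≤ R * (((n : ℝ) + 1) * L₁ ^ (1 - ε)) := by gcongr
    _ = L₁ ^ (1 - ε) * (2 * R * (n + 1)) / 2 := by ring
    _ ≤ L₁ ^ (1 - ε) * L₁ ^ ε / 2 := by gcongr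
    _ = L₁ / 2 := by rw [← Real.rpow_add (by positivity), sub_add_cancel, Real.rpow_one]

lemma exists_grid_parameters {ε : ℝ} (hε : 0 ≤ ε) (hε₁ : ε ≤ 1) {N : ℕ} (hN : 1 ≤ N) :
    ∃ J M : ℕ, 1 ≤ J ∧ 1 ≤ M ∧ M ≤ N ∧ N ≤ M ^ 2 ∧ (M : ℝ) ≤ 2 * (N : ℝ) ^ (1 - ε / 2) ∧
      (J : ℝ) * (N : ℝ) ^ ((1 - ε) / 2) ≤ √N ∧ (N : ℝ) ≤ 2 * J * M := by
  have hN₁ : (1 : ℝ) ≤ N := by exact_mod_cast hN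
  have hN₀ : (0 : ℝ) < N := by positivity
  have hM₁ : 1 ≤ (N : ℝ) ^ (1 - ε / 2) := Real.one_le_rpow hN₁ (by linarith)
  have hJ₁ : 1 ≤ ⌊(N : ℝ) ^ (ε / 2)⌋₊ := by
    rw [Nat.one_le_floor_iff]
    exact Real.one_le_rpow hN₁ (by linarith)
  have hJ₁' : (1 : ℝ) ≤ ⌊(N : ℝ) ^ (ε / 2)⌋₊ := by exact_mod_cast hJ₁
  have hJ : (⌊(N : ℝ) ^ (ε / 2)⌋₊ : ℝ) ≤ (N : ℝ) ^ (ε / 2) := Nat.floor_le (by positivity)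
  have hJ' := Nat.lt_floor_add_one ((N : ℝ) ^ (ε / 2))
  have hM := Nat.le_ceil ((N : ℝ) ^ (1 - ε / 2))
  have hM' := Nat.ceil_lt_add_one (zero_le_one.trans hM₁)
  refine ⟨⌊(N : ℝ) ^ (ε / 2)⌋₊, ⌈(N : ℝ) ^ (1 - ε / 2)⌉₊, hJ₁, ?_, ?_, ?_, by linarith, ?_, ?_⟩
  · exact_mod_cast hM₁.trans hM
  · exact Nat.ceil_le.2 (Real.rpow_le_self_of_one_le hN₁ (by linarith))
  · have : (N : ℝ) ≤ (⌈(N : ℝ) ^ (1 - ε / 2)⌉₊ : ℝ) ^ 2 :=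
      calc (N : ℝ) ≤ (N : ℝ) ^ ((1 - ε / 2) * (2 : ℕ)) :=
            Real.self_le_rpow_of_one_le hN₁ (by push_cast; linarith)
        _ = ((N : ℝ) ^ (1 - ε / 2)) ^ 2 := Real.rpow_mul_natCast hN₀.le _ _
        _ ≤ _ := by gcongr
    exact_mod_cast this
  · calc (⌊(N : ℝ) ^ (ε / 2)⌋₊ : ℝ) * (N : ℝ) ^ ((1 - ε) / 2)
        ≤ (N : ℝ) ^ (ε / 2) * (N : ℝ) ^ ((1 - ε) / 2) := by gcongr
      _ = √N := by rw [← Real.rpow_add hN₀, Real.sqrt_eq_rpow]; congr 1; ring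
  · calc (N : ℝ) = (N : ℝ) ^ (ε / 2) * (N : ℝ) ^ (1 - ε / 2) := by
          rw [← Real.rpow_add hN₀, add_sub_cancel, Real.rpow_one]
      _ ≤ _ := by gcongr; linarith

/-! ### The spectral inequality -/

lemma norm_sq_le_of_mem_halfOpenCube {n : ℕ} {L : ℝ} {x : En n}
    (hx : x.ofLp ∈ halfOpenCube (fun _ => -L) (2 * L)) : ‖x‖ ^ 2 ≤ n * L ^ 2 := by
  have hcoord (i : Fin n) : ‖x i‖ ^ 2 ≤ L ^ 2 := by
    have hxi := mem_halfOpenCube.1 hx i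
    rw [Real.norm_eq_abs]
    gcongr
    exact abs_le.2 ⟨hxi.1, by linarith⟩
  calc ‖x‖ ^ 2 = ∑ i, ‖x i‖ ^ 2 := EuclideanSpace.norm_sq_eq x
    _ ≤ ∑ _i : Fin n, L ^ 2 := Finset.sum_le_sum fun i _ => hcoord i
    _ = n * L ^ 2 := by simp

lemma jap_rpow (n : ℕ) (x : En n) (p : ℝ) : jap n x ^ p = (1 + ‖x‖ ^ 2) ^ (p / 2) := by
  rw [jap, Real.sqrt_eq_rpow, ← Real.rpow_mul (by positivity), one_div_mul_eq_div]

lemma mul_jap_rpow_le_of_mem_halfOpenCube {n N : ℕ} (hN : 1 ≤ N) {ε R L₁ : ℝ} (hε₁ : ε ≤ 1)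
    (hR : 0 ≤ R) (hL₁ : R * (1 + n * L₁ ^ 2) ^ ((1 - ε) / 2) ≤ L₁ / 2) {x : En n}
    (hx : x.ofLp ∈ halfOpenCube (fun _ => -(L₁ * √N)) (2 * (L₁ * √N))) :
    R * jap n x ^ (1 - ε) ≤ L₁ / 2 * (N : ℝ) ^ ((1 - ε) / 2) := by
  have hN₁ : (1 : ℝ) ≤ N := by exact_mod_cast hN
  have hx₂ : ‖x‖ ^ 2 ≤ n * (L₁ ^ 2 * N) := by
    simpa [mul_pow, Real.sq_sqrt N.cast_nonneg] using norm_sq_le_of_mem_halfOpenCube hx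
  calc R * jap n x ^ (1 - ε) = R * (1 + ‖x‖ ^ 2) ^ ((1 - ε) / 2) := by rw [jap_rpow]
    _ ≤ R * ((1 + n * L₁ ^ 2) * N) ^ ((1 - ε) / 2) := by
      gcongr
      linarith
    _ = R * (1 + n * L₁ ^ 2) ^ ((1 - ε) / 2) * (N : ℝ) ^ ((1 - ε) / 2) := by
      rw [Real.mul_rpow (by positivity) (by positivity), mul_assoc]
    _ ≤ L₁ / 2 * (N : ℝ) ^ ((1 - ε) / 2) := by gcongr

section HermiteCube

variable {n N D J : ℕ} {θ s δ : ℝ} (c : (Fin n → ℕ) → ℂ)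

lemma setIntegral_halfOpenCube_norm_sq_hermiteSum_le
    (hc : 0 < ∑ α ∈ Finset.Iic (fun _ : Fin n => N), ‖c α‖ ^ 2) (hD : 1 ≤ D) (hθ : 0 < θ)
    (hθ₁ : θ ≤ 1) (a : Fin n → ℝ) (hs : 0 < s) (hδ₀ : 0 < δ)
    (hδ : √(2 * ((N : ℝ) + D)) ^ D * ((N : ℝ) + D + 2) * s ^ D / (D - 1).factorial ≤ δ)
    (hδ₁ : δ ≤ 1) {ω : Set (Fin n → ℝ)} (hω : MeasurableSet ω)
    (hvol : ∀ m : Fin n → Fin J,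
      ENNReal.ofReal θ * volume (halfOpenCube (fun i => a i + (m i : ℕ) * s) s) ≤
        volume (ω ∩ halfOpenCube (fun i => a i + (m i : ℕ) * s) s)) :
    ∫ x in halfOpenCube a (J * s), ‖hermiteSum (Finset.Iic fun _ => N) c x‖ ^ 2 ≤
      4 / θ * (remezConst n (θ / 2) ^ D) ^ 2 *
          (∫ x in ω, ‖hermiteSum (Finset.Iic fun _ => N) c x‖ ^ 2) +
        (∑ α ∈ Finset.Iic (fun _ : Fin n => N), ‖c α‖ ^ 2) *
          (10 * (remezConst n (θ / 2) ^ D) ^ 2 *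
            (((N : ℝ) + 1) ^ n * (((n : ℝ) + 1) * ((N : ℝ) + 3) ^ n * δ)) ^ 2 * (J * s) ^ n) := by
  set A : Finset (Fin n → ℕ) := Finset.Iic fun _ => N
  set S := ∑ α ∈ A, ‖c α‖ ^ 2
  set Λ := remezConst n (θ / 2)
  set η := ((N : ℝ) + 1) ^ n * (((n : ℝ) + 1) * ((N : ℝ) + 3) ^ n * δ)
  have hη : 0 < √S * η := by positivity
  have hA : ∀ α ∈ A, ∀ i, α i ≤ N := fun α hα => Finset.mem_Iic.1 hα
  have hcard : (A.card : ℝ) = ((N : ℝ) + 1) ^ n := by simp [A, Pi.card_Iic]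
  have hgrid := setIntegral_halfOpenCube_le_of_grid (J := J) (a := a)
    (B := 4 / θ * (Λ ^ D) ^ 2) (E := (Λ ^ D) ^ 2 * (10 * (√S * η) ^ 2))
    (integrable_norm_sq_hermiteSum A c) (fun x => by positivity) hω hs (by positivity) fun m => by
      obtain ⟨P, hP, hFP⟩ := exists_isSeparatelyPolynomial_norm_hermiteSum_sub_le c hA hD
        (fun i => a i + (m i : ℕ) * s) hs hδ hδ₁
      refine (hP.setIntegral_norm_sq_le (continuous_hermiteSum A c) hθ hθ₁ hη hs
        (fun x hx => (hFP x hx).trans ?_) hω (hvol m)).trans_eq ?_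
      · rw [hcard, Fintype.card_fin]
        calc _ = √S * (((N : ℝ) + 1) ^ n * ((n : ℝ) * ((N : ℝ) + 3) ^ n * δ)) := by ring
          _ ≤ √S * (((N : ℝ) + 1) ^ n * (((n : ℝ) + 1) * ((N : ℝ) + 3) ^ n * δ)) := by
            gcongr
            linarith
      · rw [Fintype.card_fin]
        ring
  refine hgrid.trans_eq ?_
  rw [Fintype.card_fin, mul_pow (√S), Real.sq_sqrt hc.le]
  ring

lemma setIntegral_compl_norm_sq_hermiteSum_le_half {L₁ : ℝ} (hN : 1 ≤ N) (hL₁ : 0 < L₁)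
    (hL₁' : 8 * 4 ^ n ≤ L₁ ^ 2) :
    ∫ x in (halfOpenCube (fun _ => -(L₁ * √N)) (2 * (L₁ * √N)))ᶜ,
        ‖hermiteSum (Finset.Iic fun _ => N) c x‖ ^ 2 ≤
      (∑ α ∈ Finset.Iic (fun _ : Fin n => N), ‖c α‖ ^ 2) * (1 / 2) := by
  have hcard : ((Finset.Iic fun _ : Fin n => N).card : ℝ) = ((N : ℝ) + 1) ^ n := by
    simp [Pi.card_Iic]
  refine (setIntegral_compl_norm_sq_hermiteSum_le c (fun α hα => Finset.mem_Iic.1 hα)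
    (by positivity) N).trans ?_
  rw [hcard, Fintype.card_fin]
  gcongr
  exact tail_factor_le_half hN hL₁'

lemma exists_sum_norm_sq_le_mul_setIntegral_norm_sq_hermiteSum (n : ℕ) {θ L₁ : ℝ} (hθ : 0 < θ)
    (hθ₁ : θ ≤ 1) (hL₁ : 1 ≤ L₁) (hL₁' : 8 * 4 ^ n ≤ L₁ ^ 2) :
    ∃ K : ℕ, ∀ N J M : ℕ, 1 ≤ J → 1 ≤ M → M ≤ N → N ≤ M ^ 2 → (N : ℝ) ≤ 2 * J * M →
      ∀ ω : Set (Fin n → ℝ), MeasurableSet ω → ∀ s : ℝ, J * s = 2 * (L₁ * √N) →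
      (∀ m : Fin n → Fin J,
        ENNReal.ofReal θ * volume (halfOpenCube (fun i => -(L₁ * √N) + (m i : ℕ) * s) s) ≤
          volume (ω ∩ halfOpenCube (fun i => -(L₁ * √N) + (m i : ℕ) * s) s)) →
      ∀ c : (Fin n → ℕ) → ℂ, ∑ α ∈ Finset.Iic (fun _ => N), ‖c α‖ ^ 2 ≤
        16 / θ * (remezConst n (θ / 2) ^ (K * M)) ^ 2 *
          ∫ x in ω, ‖hermiteSum (Finset.Iic fun _ => N) c x‖ ^ 2 := by
  obtain ⟨K, hK, hsmall⟩ := exists_degree_factor n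
    (one_le_remezConst n (half_pos hθ) (by linarith)) hL₁
  refine ⟨K, fun N J M hJ hM hMN hNM hNJ ω hω s hJs hvol c => ?_⟩
  have hN : 1 ≤ N := hM.trans hMN
  have hJ₀ : (0 : ℝ) < J := by exact_mod_cast hJ
  have hs : 0 < s := pos_of_mul_pos_right (hJs ▸ by positivity) hJ₀.le
  have hsN : s * √N ≤ 4 * L₁ * M := by
    refine le_of_mul_le_mul_left ?_ hJ₀
    calc J * (s * √N) = 2 * L₁ * (√N * √N) := by rw [← mul_assoc, hJs]; ring
      _ ≤ 2 * L₁ * (2 * J * M) := by rw [Real.mul_self_sqrt N.cast_nonneg]; gcongr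
      _ = J * (4 * L₁ * M) := by ring
  have hsum : 0 ≤ ∑ α ∈ Finset.Iic (fun _ : Fin n => N), ‖c α‖ ^ 2 := by positivity
  rcases hsum.eq_or_lt with hc | hc
  · rw [← hc]
    positivity
  obtain ⟨δ, hδ₀, hδ₁, hδ, hbound⟩ := hsmall N M hM hMN hNM s hs.le hsN
  have hbox := setIntegral_halfOpenCube_norm_sq_hermiteSum_le c hc (Nat.mul_pos hK hM) hθ hθ₁
    (fun _ => -(L₁ * √N)) hs hδ₀ hδ hδ₁ hω hvol
  rw [hJs] at hbox
  replace hbox := hbox.trans (add_le_add_right (mul_le_mul_of_nonneg_left hbound hc.le) _)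
  have htail := setIntegral_compl_norm_sq_hermiteSum_le_half c hN (by positivity) hL₁'
  have hsplit := integral_add_compl
    (measurableSet_halfOpenCube (a := fun _ : Fin n => -(L₁ * √N)) (s := 2 * (L₁ * √N)))
    (integrable_norm_sq_hermiteSum (Finset.Iic fun _ => N) c)
  rw [integral_norm_sq_hermiteSum] at hsplit
  linear_combination 4 * hbox + 4 * htail - 4 * hsplit

end HermiteCube

lemma ThickWith.mul_volume_grid_cube_le {n N J : ℕ} {ε R γ L₁ s : ℝ} {ρ : En n → ℝ}
    {ω : Set (En n)} (ht : ThickWith n γ ρ ω) (hρ : ∀ x, 0 < ρ x) (hω : MeasurableSet ω)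
    (hρR : ∀ x, ρ x ≤ R * jap n x ^ (1 - ε)) (hN : 1 ≤ N) (hε₁ : ε ≤ 1) (hR : 0 ≤ R)
    (hL₁₀ : 0 < L₁) (hL₁ : R * (1 + n * L₁ ^ 2) ^ ((1 - ε) / 2) ≤ L₁ / 2) (hs : 0 < s)
    (hJs : J * s = 2 * (L₁ * √N)) (hJ : J * (N : ℝ) ^ ((1 - ε) / 2) ≤ √N) (m : Fin n → Fin J) :
    ENNReal.ofReal (γ / 10 ^ n) *
        volume (halfOpenCube (fun i => -(L₁ * √N) + (m i : ℕ) * s) s) ≤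
      volume (WithLp.toLp 2 ⁻¹' ω ∩ halfOpenCube (fun i => -(L₁ * √N) + (m i : ℕ) * s) s) := by
  have hJ₀ : (0 : ℝ) < J := by
    refine pos_of_mul_pos_left (b := s) ?_ hs.le
    rw [hJs]
    positivity
  refine ht.mul_volume_halfOpenCube_le hρ hω fun x hx => (hρR x).trans ?_
  have hxbox : x.ofLp ∈ halfOpenCube (fun _ => -(L₁ * √N)) (2 * (L₁ * √N)) := by
    rw [← hJs, halfOpenCube_natCast_mul_eq_iUnion _ hs]
    exact Set.mem_iUnion.2 ⟨m, hx⟩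
  refine (mul_jap_rpow_le_of_mem_halfOpenCube hN hε₁ hR hL₁ hxbox).trans ?_
  refine le_of_mul_le_mul_left ?_ hJ₀
  calc J * (L₁ / 2 * (N : ℝ) ^ ((1 - ε) / 2)) = L₁ / 2 * (J * (N : ℝ) ^ ((1 - ε) / 2)) := by ring
    _ ≤ L₁ / 2 * √N := by gcongr
    _ = J * (s / 4) := by linear_combination -hJs / 4

lemma setIntegral_eq_setIntegral_preimage_toLp {n : ℕ} (g : En n → ℝ) (ω : Set (En n)) :
    ∫ x in ω, g x = ∫ x in WithLp.toLp 2 ⁻¹' ω, g (WithLp.toLp 2 x) :=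
  ((PiLp.volume_preserving_toLp (Fin n)).setIntegral_preimage_emb
    (MeasurableEquiv.toLp 2 (Fin n → ℝ)).measurableEmbedding g ω).symm

lemma L2normOn_eq_sqrt_setIntegral_preimage_toLp {n : ℕ} {f : En n → ℂ} {F : (Fin n → ℝ) → ℂ}
    (hf : ∀ x, f (WithLp.toLp 2 x) = F x) (ω : Set (En n)) :
    L2normOn n ω f = √(∫ x in WithLp.toLp 2 ⁻¹' ω, ‖F x‖ ^ 2) := by
  simp_rw [L2normOn, setIntegral_eq_setIntegral_preimage_toLp (fun x => ‖f x‖ ^ 2), hf]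

lemma L2norm_eq_sqrt_integral {n : ℕ} {f : En n → ℂ} {F : (Fin n → ℝ) → ℂ}
    (hf : ∀ x, f (WithLp.toLp 2 x) = F x) : L2norm n f = √(∫ x, ‖F x‖ ^ 2) := by
  simpa [L2norm, L2normOn] using L2normOn_eq_sqrt_setIntegral_preimage_toLp hf Set.univ

lemma pow_mul_le_div_rpow {κt γ Λ t : ℝ} {K M : ℕ} (hκt : 1 < κt) (hγ : 0 < γ) (hγ₁ : γ ≤ 1)
    (hΛ : 1 ≤ Λ) (hM : M ≤ 2 * t) :
    Λ ^ (K * M) ≤ (κt / γ) ^ ((2 * K * Real.logb κt Λ + 1) * t) := by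
  have hκt₀ : 0 < κt := zero_lt_one.trans hκt
  have ht : 0 ≤ t := by linarith [(Nat.cast_nonneg M : (0 : ℝ) ≤ M)]
  have hlog : 0 ≤ Real.logb κt Λ := Real.logb_nonneg hκt hΛ
  calc Λ ^ (K * M) = (κt ^ Real.logb κt Λ) ^ (K * M) := by
        rw [Real.rpow_logb hκt₀ hκt.ne' (by linarith)]
    _ = κt ^ (Real.logb κt Λ * (K * M : ℕ)) := by rw [Real.rpow_mul_natCast hκt₀.le]
    _ ≤ κt ^ ((2 * K * Real.logb κt Λ + 1) * t) := by
        refine Real.rpow_le_rpow_of_exponent_le hκt.le ?_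
        push_cast
        nlinarith [mul_le_mul_of_nonneg_left hM (mul_nonneg hlog (Nat.cast_nonneg K))]
    _ ≤ (κt / γ) ^ ((2 * K * Real.logb κt Λ + 1) * t) := by
        gcongr
        exact le_div_self hκt₀.le hγ hγ₁

theorem spectral_inequality_hermite_general (n : ℕ) {κt ε R γ : ℝ} (hκt : 1 < κt) (hε : 0 < ε)
    (hε₁ : ε ≤ 1) (hR : 0 < R) (hγ : 0 < γ) (hγ₁ : γ ≤ 1) :
    ∃ κ Ct : ℝ, 0 < κ ∧ 0 < Ct ∧
      ∀ ρ : En n → ℝ, (∀ x, 0 < ρ x) → (∀ x, ρ x ≤ R * jap n x ^ (1 - ε)) →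
        ∀ ω : Set (En n), MeasurableSet ω → ThickWith n γ ρ ω →
          ∀ N : ℕ, 1 ≤ N → ∀ f ∈ hermiteSpan n N,
            L2norm n f ≤ κ * (κt / γ) ^ (Ct * (N : ℝ) ^ (1 - ε / 2)) * L2normOn n ω f := by
  obtain ⟨L₁, hL₁, hL₁n, hL₁R⟩ := exists_box_factor n hε hε₁ hR.le
  obtain ⟨θ, hθ⟩ : ∃ θ : ℝ, θ = γ / 10 ^ n := ⟨_, rfl⟩
  have hθ₀ : 0 < θ := hθ ▸ by positivity
  have hθ₁ : θ ≤ 1 := hθ ▸ div_le_one_of_le₀ (hγ₁.trans (one_le_pow₀ (by norm_num))) (by positivity)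
  obtain ⟨K, hcore⟩ :=
    exists_sum_norm_sq_le_mul_setIntegral_norm_sq_hermiteSum n hθ₀ hθ₁ hL₁ hL₁n
  have hΛ := one_le_remezConst n (half_pos hθ₀) (by linarith)
  have hlog := Real.logb_nonneg hκt hΛ
  refine ⟨4 / √θ, 2 * K * Real.logb κt (remezConst n (θ / 2)) + 1, by positivity, by positivity,
    fun ρ hρ hρR ω hω ht N hN f hf => ?_⟩
  obtain ⟨J, M, hJ, hM, hMN, hNM, hMε, hJε, hNJ⟩ := exists_grid_parameters hε.le hε₁ hN
  obtain ⟨c, hc⟩ := exists_hermiteSum_of_mem_hermiteSpan hf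
  have hJ₀ : (0 : ℝ) < J := by exact_mod_cast hJ
  have hJs : J * (2 * (L₁ * √N) / J) = 2 * (L₁ * √N) := mul_div_cancel₀ _ hJ₀.ne'
  have hest := hcore N J M hJ hM hMN hNM hNJ _ (WithLp.measurable_toLp 2 (Fin n → ℝ) hω) _ hJs
    (fun m => hθ ▸ ht.mul_volume_grid_cube_le hρ hω hρR hN hε₁ hR.le (by positivity) hL₁R
      (by positivity) hJs hJε m) c
  rw [L2norm_eq_sqrt_integral hc, L2normOn_eq_sqrt_setIntegral_preimage_toLp hc,
    integral_norm_sq_hermiteSum]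
  refine (Real.sqrt_le_sqrt hest).trans ?_
  rw [Real.sqrt_mul (by positivity), Real.sqrt_mul (by positivity), Real.sqrt_sq (by positivity),
    Real.sqrt_div (by norm_num), show √(16 : ℝ) = 4 by norm_num]
  gcongr
  exact pow_mul_le_div_rpow hκt hγ hγ₁ hΛ hMε

/-- **Spectral inequality for finite combinations of Hermite functions**
(Theorem "Spectral"): for control subsets that are γ-thick with respect to a
½-Lipschitz density ρ with m ≤ ρ(x) ≤ R⟨x⟩^{1-ε}. -/
theorem spectral_inequality_hermite (n : ℕ) :
    ∃ κt : ℝ, 1 < κt ∧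
      ∀ ε m R γ : ℝ, 0 < ε → ε ≤ 1 → 0 < m → 0 < R → 0 < γ → γ ≤ 1 →
        ∃ κ Ct : ℝ, 0 < κ ∧ 0 < Ct ∧
          ∀ ρ : En n → ℝ, (∀ x, 0 < ρ x) → LipschitzWith (1/2 : ℝ≥0) ρ →
            (∀ x, m ≤ ρ x) → (∀ x, ρ x ≤ R * jap n x ^ (1 - ε)) →
            ∀ ω : Set (En n), MeasurableSet ω → ThickWith n γ ρ ω →
              ∀ N : ℕ, 1 ≤ N → ∀ f ∈ hermiteSpan n N,
                L2norm n f ≤ κ * (κt / γ) ^ (Ct * (N : ℝ) ^ (1 - ε / 2)) *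
                  L2normOn n ω f := by
  exact ⟨2, one_lt_two, fun _ _ _ _ hε hε₁ _ hR hγ hγ₁ =>
    let ⟨κ, Ct, hκ, hCt, h⟩ :=
      spectral_inequality_hermite_general n one_lt_two hε hε₁ hR hγ hγ₁
    ⟨κ, Ct, hκ, hCt, fun ρ hρ _ _ => h ρ hρ⟩⟩

end
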